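/- arXiv:2108.01767 — 4 statements merged into one kernel-verified Lean document; each statement's English description precedes it below -/
import Mathlib

section
/- Let K be a field of characteristic zero, let G be a finite group, and let V be a finite-dimensional K-vector space on which G acts K-linearly. Consider the induced action of G on the exterior algebra Λ(V) by degree-preserving K-algebra automorphisms (each g acts as the algebra automorphism induced by its linear action on V). Then the fixed subalgebra Λ(V)^G is generated as a K-algebra by its elements of degree at most |G|, i.e., by the set Λ(V)^G ∩ (⊕_{d ≤ |G|} Λ^d(V)). (Noether's Degree Bound for the exterior algebra.) -/
/-!
Write `n = |G|` and enumerate `G` as `g₁, …, gₙ`. For `w₁, …, wₙ ∈ V` and every `h ∈ G` the product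
`∏ᵢ (h gᵢ⁻¹ wᵢ - wᵢ)` vanishes, because its factor with `gᵢ = h` does. Expanding it in `Λ(V)`,
moving the factors translated by `h` to the left and summing over `h` expresses `n • w₁ ⋯ wₙ`
through terms `Tr(a) * b` with `a ∈ Λ^p(V)`, `b ∈ Λ^q(V)`, `p + q = n` and `p ≥ 1`. Once `n` is
invertible, `Λ(V)` is therefore spanned by elements of degree less than `n` as a left module over
the algebra `B` generated by the invariants of degree at most `n`. The transfer `Tr` is `B`-linear,
so it maps `Λ(V)` into `B`; and every invariant `x` is the transfer of `n⁻¹ • x`.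
-/

namespace NoetherDegreeBound

open Finset.HasAntidiagonal (antidiagonal mem_antidiagonal)

lemma sup_pow_eq_sum_antidiagonal {S : Type*} [IdemSemiring S] {x y : S} (h : Commute x y)
    (m : ℕ) : (x ⊔ y) ^ m = ∑ pq ∈ antidiagonal m, x ^ pq.1 * y ^ pq.2 := by
  rw [← add_eq_sup, h.add_pow']
  refine Finset.sum_congr rfl fun pq hpq => nsmul_eq_self (Nat.choose_pos ?_).ne' _
  exact (mem_antidiagonal.1 hpq).le.trans' (Nat.le_add_right _ _)

lemma list_prod_ofFn_mem_pow {R A : Type*} [CommSemiring R] [Semiring A] [Algebra R A]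
    {X : Submodule R A} {m : ℕ} {x : Fin m → A} (hx : ∀ i, x i ∈ X) :
    (List.ofFn x).prod ∈ X ^ m :=
  Submodule.pow_subset_pow _ (Set.mem_pow.2 ⟨fun i => ⟨x i, hx i⟩, rfl⟩)

lemma list_prod_ofFn_add_sub_mem {R A : Type*} [CommRing R] [Ring A] [Algebra R A]
    {X Y : Submodule R A} (h : Y * X ≤ X * Y) {m : ℕ} {x y : Fin (m + 1) → A}
    (hx : ∀ i, x i ∈ X) (hy : ∀ i, y i ∈ Y) :
    (List.ofFn fun i => x i + y i).prod - (List.ofFn y).prod ∈ X * (X ⊔ Y) ^ m := by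
  induction m with
  | zero => simpa using hx 0
  | succ m ih =>
    set P := (List.ofFn fun i => x (Fin.succ i) + y (Fin.succ i)).prod
    set Q := (List.ofFn fun i => y (Fin.succ i)).prod
    have hP : P ∈ (X ⊔ Y) ^ (m + 1) :=
      list_prod_ofFn_mem_pow fun i => Submodule.add_mem_sup (hx _) (hy _)
    have hPQ : P - Q ∈ X * (X ⊔ Y) ^ m := ih (fun i => hx _) fun i => hy _
    have hswap : Y * (X * (X ⊔ Y) ^ m) ≤ X * (X ⊔ Y) ^ (m + 1) := by
      rw [← mul_assoc, pow_succ', ← mul_assoc]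
      exact mul_le_mul_left (h.trans (mul_le_mul_right le_sup_right _)) _
    have hsplit : (x 0 + y 0) * P - y 0 * Q = x 0 * P + y 0 * (P - Q) := by noncomm_ring
    rw [List.ofFn_succ, List.ofFn_succ (f := y), List.prod_cons, List.prod_cons, hsplit]
    exact add_mem (Submodule.mul_mem_mul (hx 0) hP)
      (hswap (Submodule.mul_mem_mul (hy 0) hPQ))

section Semiring

variable {K A G : Type*} [CommSemiring K] [Semiring A] [Algebra K A]

variable (G) in
/-- The constant functions `G → A` with value in `W`. -/
def constants (W : Submodule K A) : Submodule K (G → A) :=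
  W.map (Pi.constAlgHom K G A).toLinearMap

lemma constants_pow (W : Submodule K A) (m : ℕ) : constants G (W ^ m) = constants G W ^ m :=
  Submodule.map_pow ..

variable [Group G]

/-- The algebra homomorphism sending `a` to its orbit `g ↦ α g a`, for a group `G` acting on `A`
through `α`. -/
def orbitMap (α : G →* (A →ₐ[K] A)) : A →ₐ[K] (G → A) :=
  AlgHom.pi fun g => α g

/-- The orbits `g ↦ α g w` of the elements `w` of `W`, as functions on `G`. That this submodule
commutes with `constants G W` says that a translate of an element of `W` can be moved past an
element of `W`, uniformly in `g`. -/
def orbits (α : G →* (A →ₐ[K] A)) (W : Submodule K A) : Submodule K (G → A) :=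
  W.map (orbitMap α).toLinearMap

variable {α : G →* (A →ₐ[K] A)} {W : Submodule K A}

lemma orbits_pow (m : ℕ) : orbits α (W ^ m) = orbits α W ^ m :=
  Submodule.map_pow ..

lemma map_mem_pow (hW : ∀ g, ∀ w ∈ W, α g w ∈ W) (g : G) {m : ℕ} {a : A} (ha : a ∈ W ^ m) :
    α g a ∈ W ^ m := by
  have hle : (W ^ m).map (α g).toLinearMap ≤ W ^ m := by
    rw [Submodule.map_pow]
    exact pow_le_pow_left' (Submodule.map_le_iff_le_comap.2 (hW g)) m
  exact hle (Submodule.mem_map_of_mem ha)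

variable [Fintype G]

/-- The transfer (or trace) `a ↦ ∑ g, α g a`. -/
def transfer (α : G →* (A →ₐ[K] A)) : A →ₗ[K] A :=
  ∑ g, (α g).toLinearMap

lemma transfer_apply (a : A) : transfer α a = ∑ g, α g a := by
  simp [transfer]

lemma map_transfer (g : G) (a : A) : α g (transfer α a) = transfer α a := by
  simp only [transfer_apply, map_sum, ← AlgHom.mul_apply, ← map_mul]
  exact Fintype.sum_equiv (Equiv.mulLeft g) _ _ fun _ => rfl

/-- The subalgebra generated by the invariants of degree at most `|G|`, where `W ^ d` plays the role
of the part of degree `d`. -/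
def lowDegreeInvariants (α : G →* (A →ₐ[K] A)) (W : Submodule K A) : Subalgebra K A :=
  Algebra.adjoin K {y | (∀ g, α g y = y) ∧ y ∈ ⨆ d ∈ Set.Iic (Fintype.card G), W ^ d}

lemma map_of_mem_lowDegreeInvariants {b : A} (hb : b ∈ lowDegreeInvariants α W) (g : G) :
    α g b = b := by
  have hle : lowDegreeInvariants α W ≤ AlgHom.equalizer (α g) (AlgHom.id K A) :=
    Algebra.adjoin_le fun _ hy => hy.1 g
  exact hle hb

lemma transfer_mul_of_mem_lowDegreeInvariants {b : A} (hb : b ∈ lowDegreeInvariants α W) (a : A) :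
    transfer α (b * a) = b * transfer α a := by
  simp only [transfer_apply, map_mul, map_of_mem_lowDegreeInvariants hb, Finset.mul_sum]

lemma transfer_mem_of_mem_pow (hW : ∀ g, ∀ w ∈ W, α g w ∈ W) {d : ℕ} (hd : d ≤ Fintype.card G)
    {a : A} (ha : a ∈ W ^ d) : transfer α a ∈ lowDegreeInvariants α W := by
  refine Algebra.subset_adjoin ⟨fun g => map_transfer g a, ?_⟩
  refine Submodule.mem_iSup_of_mem d (Submodule.mem_iSup_of_mem hd ?_)
  rw [transfer_apply]
  exact sum_mem fun g _ => map_mem_pow hW g ha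

end Semiring

section Ring

variable {K A G : Type*} [CommRing K] [Ring A] [Algebra K A] [Group G]
  {α : G →* (A →ₐ[K] A)} {W : Submodule K A}

lemma commute_orbits_constants_of_anticommute (hW : ∀ g, ∀ w ∈ W, α g w ∈ W)
    (hanti : ∀ u ∈ W, ∀ v ∈ W, u * v = -(v * u)) :
    Commute (orbits α W) (constants G W) := by
  have horbit : ∀ u ∈ W, ∀ v ∈ W, orbitMap α u * Pi.constAlgHom K G A v =
      -(Pi.constAlgHom K G A v * orbitMap α u) :=
    fun u hu v hv => funext fun g => hanti _ (hW g u hu) v hv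
  apply le_antisymm <;> rw [Submodule.mul_le]
  · rintro _ ⟨u, hu, rfl⟩ _ ⟨v, hv, rfl⟩
    exact (horbit u hu v hv).symm ▸ neg_mem (Submodule.mul_mem_mul
      (Submodule.mem_map_of_mem hv) (Submodule.mem_map_of_mem hu))
  · rintro _ ⟨v, hv, rfl⟩ _ ⟨u, hu, rfl⟩
    exact (neg_eq_iff_eq_neg.2 (horbit u hu v hv)) ▸ neg_mem (Submodule.mul_mem_mul
      (Submodule.mem_map_of_mem hu) (Submodule.mem_map_of_mem hv))

lemma list_prod_neg_orbitMap_add_const_eq_zero {m : ℕ} (e : Fin m ≃ G) (w : Fin m → A) :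
    (List.ofFn fun i => -orbitMap α (α (e i)⁻¹ (w i)) + Pi.constAlgHom K G A (w i)).prod = 0 := by
  ext h
  rw [Pi.list_prod_apply]
  refine List.prod_eq_zero (List.mem_map.2 ⟨_, List.mem_ofFn.2 ⟨e.symm h, rfl⟩, ?_⟩)
  simp [orbitMap, ← AlgHom.mul_apply, ← map_mul]

variable [Fintype G]

lemma constants_pow_card_le_orbits_mul (hW : ∀ g, ∀ w ∈ W, α g w ∈ W)
    (h : constants G W * orbits α W ≤ orbits α W * constants G W) {m : ℕ}
    (hm : Fintype.card G = m + 1) :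
    constants G (W ^ (m + 1)) ≤ orbits α W * (orbits α W ⊔ constants G W) ^ m := by
  rw [constants, Submodule.map_le_iff_le_comap, Submodule.pow_eq_span_pow_set, Submodule.span_le]
  intro z hz
  obtain ⟨w, rfl⟩ := Set.mem_pow.1 hz
  have hmem := list_prod_ofFn_add_sub_mem h
    (x := fun i => -orbitMap α (α ((Fintype.equivFinOfCardEq hm).symm i)⁻¹ (w i)))
    (y := fun i => Pi.constAlgHom K G A (w i))
    (fun i => neg_mem (Submodule.mem_map_of_mem (hW _ _ (w i).2)))
    (fun i => Submodule.mem_map_of_mem (w i).2)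
  rw [list_prod_neg_orbitMap_add_const_eq_zero, zero_sub, neg_mem_iff] at hmem
  simpa [map_list_prod, List.map_ofFn, Function.comp_def] using hmem

lemma card_nsmul_mem_of_transfer_mul_mem (hW : ∀ g, ∀ w ∈ W, α g w ∈ W)
    (h : Commute (orbits α W) (constants G W)) {N : Submodule K A} {m : ℕ}
    (hm : Fintype.card G = m + 1)
    (hN : ∀ p q, p + q = m → ∀ a ∈ W ^ (p + 1), ∀ b ∈ W ^ q, transfer α a * b ∈ N)
    {w : A} (hw : w ∈ W ^ (m + 1)) :
    Fintype.card G • w ∈ N := by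
  let S : (G → A) →ₗ[K] A := ∑ g, LinearMap.proj g
  have hterm : ∀ p q, p + q = m → orbits α W ^ (p + 1) * constants G W ^ q ≤ N.comap S := by
    intro p q hpq
    rw [← orbits_pow, ← constants_pow, Submodule.mul_le]
    rintro _ ⟨a, ha, rfl⟩ _ ⟨b, hb, rfl⟩
    simpa [S, transfer_apply, orbitMap, Finset.sum_mul] using hN p q hpq a ha b hb
  have hle : orbits α W * (orbits α W ⊔ constants G W) ^ m ≤ N.comap S := by
    rw [sup_pow_eq_sum_antidiagonal h, Finset.mul_sum]
    refine Finset.sum_induction _ (· ≤ N.comap S) (fun _ _ => sup_le) bot_le fun pq hpq => ?_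
    rw [← mul_assoc, ← pow_succ']
    exact hterm _ _ (mem_antidiagonal.1 hpq)
  simpa [S] using
    hle (constants_pow_card_le_orbits_mul hW h.eq.ge hm (Submodule.mem_map_of_mem hw))

lemma pow_card_le_lowDegreeInvariants_mul (hW : ∀ g, ∀ w ∈ W, α g w ∈ W)
    (h : Commute (orbits α W) (constants G W)) (hcard : IsUnit (Fintype.card G : K)) :
    W ^ Fintype.card G ≤
      (lowDegreeInvariants α W).toSubmodule * ⨆ d < Fintype.card G, W ^ d := by
  obtain ⟨m, hm⟩ := Nat.exists_eq_add_one.2 (Fintype.card_pos (α := G))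
  intro w hw
  rw [← Submodule.smul_mem_iff_of_isUnit _ hcard, Nat.cast_smul_eq_nsmul]
  refine card_nsmul_mem_of_transfer_mul_mem hW h hm (fun p q hpq a ha b hb => ?_) (hm ▸ hw)
  refine Submodule.mul_mem_mul (transfer_mem_of_mem_pow hW (by lia) ha) ?_
  exact Submodule.mem_iSup_of_mem q (Submodule.mem_iSup_of_mem (by lia) hb)

lemma lowDegreeInvariants_mul_iSup_pow_eq_top (hW : ∀ g, ∀ w ∈ W, α g w ∈ W)
    (h : Commute (orbits α W) (constants G W)) (hcard : IsUnit (Fintype.card G : K))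
    (htop : ⨆ d, W ^ d = ⊤) :
    (lowDegreeInvariants α W).toSubmodule * ⨆ d < Fintype.card G, W ^ d = ⊤ := by
  set B := (lowDegreeInvariants α W).toSubmodule
  set U := ⨆ d < Fintype.card G, W ^ d
  have hU : U * W ≤ U ⊔ B * U := by
    simp only [U, Submodule.iSup_mul, iSup_le_iff, ← pow_succ]
    intro d hd
    rcases Nat.lt_or_eq_of_le (Nat.succ_le_of_lt hd) with hlt | heq
    · exact le_sup_of_le_left (le_iSup₂_of_le (d + 1) hlt le_rfl)
    · exact le_sup_of_le_right (heq ▸ pow_card_le_lowDegreeInvariants_mul hW h hcard)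
  have hBU : B * U * W ≤ B * U := calc
    B * U * W = B * (U * W) := mul_assoc ..
    _ ≤ B * (U ⊔ B * U) := mul_le_mul_right hU _
    _ = B * U := by
      rw [Submodule.mul_sup, ← mul_assoc, (Subalgebra.isIdempotentElem_toSubmodule _).eq, sup_idem]
  rw [eq_top_iff, ← htop, iSup_le_iff]
  intro d
  induction d with
  | zero =>
    rw [pow_zero, Submodule.one_le]
    have hone : (1 : A) ∈ U := Submodule.mem_iSup_of_mem 0
      (Submodule.mem_iSup_of_mem Fintype.card_pos (Submodule.one_le.1 le_rfl))
    simpa using Submodule.mul_mem_mul (one_mem (lowDegreeInvariants α W)) hone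
  | succ d ih => exact (pow_succ W d).trans_le ((mul_le_mul_left ih W).trans hBU)

lemma transfer_mem_lowDegreeInvariants (hW : ∀ g, ∀ w ∈ W, α g w ∈ W)
    (h : Commute (orbits α W) (constants G W)) (hcard : IsUnit (Fintype.card G : K))
    (htop : ⨆ d, W ^ d = ⊤) (a : A) : transfer α a ∈ lowDegreeInvariants α W := by
  set B := lowDegreeInvariants α W
  have hU : ⨆ d < Fintype.card G, W ^ d ≤ B.toSubmodule.comap (transfer α) :=
    iSup₂_le fun d hd a ha => transfer_mem_of_mem_pow hW hd.le ha
  have hBU : B.toSubmodule * ⨆ d < Fintype.card G, W ^ d ≤ B.toSubmodule.comap (transfer α) := by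
    rw [Submodule.mul_le]
    intro b hb u hu
    rw [Submodule.mem_comap, transfer_mul_of_mem_lowDegreeInvariants hb]
    exact B.mul_mem hb (hU hu)
  rw [lowDegreeInvariants_mul_iSup_pow_eq_top hW h hcard htop] at hBU
  exact hBU Submodule.mem_top

theorem mem_lowDegreeInvariants_iff (hW : ∀ g, ∀ w ∈ W, α g w ∈ W)
    (h : Commute (orbits α W) (constants G W)) (hcard : IsUnit (Fintype.card G : K))
    (htop : ⨆ d, W ^ d = ⊤) {x : A} :
    x ∈ lowDegreeInvariants α W ↔ ∀ g, α g x = x := by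
  refine ⟨map_of_mem_lowDegreeInvariants, fun hx => ?_⟩
  have htransfer : transfer α x = (Fintype.card G : K) • x := by
    simp [transfer_apply, hx, Nat.cast_smul_eq_nsmul]
  rw [← Subalgebra.mem_toSubmodule, ← Submodule.smul_mem_iff_of_isUnit _ hcard, ← htransfer]
  exact transfer_mem_lowDegreeInvariants hW h hcard htop x

end Ring

section ExteriorAlgebra

variable {K G V : Type*} [CommRing K] [AddCommGroup V] [Module K V]

/-- The action on the exterior algebra by algebra endomorphisms induced by a representation. -/
def exteriorAction [Monoid G] (ρ : Representation K G V) :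
    G →* (ExteriorAlgebra K V →ₐ[K] ExteriorAlgebra K V) where
  toFun g := ExteriorAlgebra.map (ρ g)
  map_one' := by rw [map_one]; exact ExteriorAlgebra.map_id
  map_mul' g h := by rw [map_mul]; exact (ExteriorAlgebra.map_comp_map _ _).symm

lemma exteriorAction_mem_range_ι [Monoid G] (ρ : Representation K G V) (g : G) :
    ∀ w ∈ LinearMap.range (ExteriorAlgebra.ι K (M := V)),
      exteriorAction ρ g w ∈ LinearMap.range (ExteriorAlgebra.ι K (M := V)) := by
  rintro _ ⟨v, rfl⟩
  exact ⟨ρ g v, (ExteriorAlgebra.map_apply_ι _ _).symm⟩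

lemma anticommute_of_mem_range_ι : ∀ u ∈ LinearMap.range (ExteriorAlgebra.ι K (M := V)),
    ∀ v ∈ LinearMap.range (ExteriorAlgebra.ι K (M := V)), u * v = -(v * u) := by
  rintro _ ⟨u, rfl⟩ _ ⟨v, rfl⟩
  exact eq_neg_of_add_eq_zero_left (ExteriorAlgebra.ι_add_mul_swap u v)

lemma iSup_exteriorPower_eq_top : ⨆ d : ℕ, ⋀[K]^d V = ⊤ :=
  (DirectSum.Decomposition.isInternal fun d : ℕ => ⋀[K]^d V).submodule_iSup_eq_top

end ExteriorAlgebra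

end NoetherDegreeBound

open NoetherDegreeBound in
theorem noether_degree_bound_exterior_algebra_general
    {K : Type*} [CommRing K] {G : Type*} [Group G] [Fintype G]
    (hcard : IsUnit (Fintype.card G : K))
    {V : Type*} [AddCommGroup V] [Module K V] (ρ : Representation K G V)
    (x : ExteriorAlgebra K V) :
    x ∈ Algebra.adjoin K
        {y : ExteriorAlgebra K V |
          (∀ g : G, ExteriorAlgebra.map (ρ g) y = y) ∧
          y ∈ (⨆ d ∈ Set.Iic (Fintype.card G), ⋀[K]^d V : Submodule K (ExteriorAlgebra K V))}
      ↔ ∀ g : G, ExteriorAlgebra.map (ρ g) x = x :=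
  have hW := exteriorAction_mem_range_ι ρ
  mem_lowDegreeInvariants_iff hW
    (commute_orbits_constants_of_anticommute hW anticommute_of_mem_range_ι)
    hcard iSup_exteriorPower_eq_top

/-- **Noether's Degree Bound for the exterior algebra.**
Let `K` be a field of characteristic zero, `G` a finite group acting
`K`-linearly on a finite-dimensional `K`-vector space `V`, inducing an action
on the exterior algebra `Λ(V)` by degree-preserving algebra automorphisms.
Then the fixed subalgebra `Λ(V)^G` is generated as a `K`-algebra by its
elements of degree at most `|G|`, i.e. by `Λ(V)^G ∩ (⊕_{d ≤ |G|} Λ^d(V))`. -/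
theorem noether_degree_bound_exterior_algebra
    (K : Type*) [Field K] [CharZero K]
    (G : Type*) [Group G] [Fintype G]
    (V : Type*) [AddCommGroup V] [Module K V] [FiniteDimensional K V]
    (ρ : Representation K G V) :
    ∀ x : ExteriorAlgebra K V,
      x ∈ Algebra.adjoin K
          {y : ExteriorAlgebra K V |
            (∀ g : G, ExteriorAlgebra.map (ρ g) y = y) ∧
            y ∈ (⨆ d ∈ Set.Iic (Fintype.card G), ⋀[K]^d V : Submodule K (ExteriorAlgebra K V))}
        ↔ ∀ g : G, ExteriorAlgebra.map (ρ g) x = x :=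
  noether_degree_bound_exterior_algebra_general
    (Nat.cast_ne_zero.2 Fintype.card_ne_zero).isUnit ρ
end

section
/- Let K be a field of characteristic zero, let V be a finite-dimensional K-vector space, and let L_1, …, L_t be linear subspaces of V. For each i, let J_i be the two-sided ideal of the exterior algebra Λ(V) generated by the degree-one elements ι(L_i) (the image of L_i under the canonical inclusion ι : V → Λ(V)). Then the intersection ideal J_1 ∩ J_2 ∩ ⋯ ∩ J_t is generated by its homogeneous elements of degree at most t. -/
/-!
For a finite-dimensional subspace `W` of `U` with basis `xᵢ`, the canonical element
`θ = ∑ xᵢ* ⊗ xᵢ` acts on linear maps `ω : Sym W* → Λ(U)` by `(θ ∧ ω)(r) = ∑ xᵢ ∧ ω(xᵢ* r)`. If `a`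
lies in an intersection `I` of `t` linear ideals, and `ε` is the augmentation of `Sym W*`, then
`r ↦ ε(r) a` is closed; evaluating a primitive of it with values in `I` at `1` expresses `a` through
elements of `I` of smaller degree. So it suffices that the complex of forms with values in
`I ∩ Λ(W)` is exact in degrees greater than `t`.

This goes by induction on `t`. Enlarging `W` by a vector amounts to adjoining a polynomial variable
to `Sym W*`, so one may take `W = ∑ Lᵢ`. Adjoin new vectors `eᵢ`, one for each `Lᵢ`. The forms with
values in the intersection ideal of the `Lᵢ + K eᵢ` make up an iterated mapping cone on the
intersections of subfamilies, with differential `θ + ∑ eᵢ`; by induction its exactness amounts to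
that for `I` itself, while the part of it lying in the ideal of the `eᵢ`, which involves only proper
subfamilies, is exact. When each `xₐ` lies in one of the `Lᵢ`, transvections built from `xₐ` and
`eᵢ*` preserve this ideal and conjugate the differential to `∑ eᵢ`, which is constant along
`Sym W*`; and everything killed by `∑ eᵢ` lies in the ideal of the `eᵢ`.
-/

namespace SubspaceArrangement

open CliffordAlgebra (contractLeft contractLeft_ι_mul contractLeft_contractLeft
  contractLeft_algebraMap)
open ExteriorAlgebra (ι exteriorPower)
open Module (Dual)
open Submodule
open scoped TensorProduct

variable {K U V : Type*} [Field K] [AddCommGroup U] [Module K U] [AddCommGroup V] [Module K V]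

local infix:70 "⨼" => contractLeft

section Exterior

variable (f : Dual K U) {m : ℕ}

lemma ι_mul_ι_mul_comm (u v : U) (a : ExteriorAlgebra K U) :
    ι K u * (ι K v * a) = -(ι K v * (ι K u * a)) := by
  rw [← mul_assoc, ← mul_assoc, ← neg_mul,
    eq_neg_of_add_eq_zero_left (ExteriorAlgebra.ι_add_mul_swap u v)]

lemma ι_mul_ι_mul_self (u : U) (a : ExteriorAlgebra K U) : ι K u * (ι K u * a) = 0 := by
  rw [← mul_assoc, ExteriorAlgebra.ι_sq_zero, zero_mul]

lemma contractLeft_map (φ : U →ₗ[K] V) (f : Dual K V) (a : ExteriorAlgebra K U) :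
    f⨼(ExteriorAlgebra.map φ a) = ExteriorAlgebra.map φ ((f ∘ₗ φ)⨼a) := by
  induction a using CliffordAlgebra.left_induction with
  | algebraMap r => simp only [AlgHom.commutes, contractLeft_algebraMap, map_zero]
  | add a b ha hb => simp only [map_add, ha, hb]
  | ι_mul a u ha =>
    rw [map_mul, ExteriorAlgebra.map_apply_ι, contractLeft_ι_mul, contractLeft_ι_mul, ha, map_sub,
      map_smul, map_mul, ExteriorAlgebra.map_apply_ι, LinearMap.comp_apply]

lemma map_id_add_smulRight (u : U) (a : ExteriorAlgebra K U) :
    ExteriorAlgebra.map (LinearMap.id + f.smulRight u) a = a + ι K u * (f⨼a) := by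
  induction a using CliffordAlgebra.left_induction with
  | algebraMap r => rw [AlgHom.commutes, contractLeft_algebraMap, mul_zero, add_zero]
  | add a b ha hb => simp only [map_add, mul_add, ha, hb, add_add_add_comm]
  | ι_mul a v ha =>
    rw [map_mul, ExteriorAlgebra.map_apply_ι, ha, contractLeft_ι_mul, LinearMap.add_apply,
      LinearMap.id_apply, LinearMap.smulRight_apply, map_add, map_smul, add_mul, mul_add, mul_add,
      smul_mul_assoc, smul_mul_assoc, ι_mul_ι_mul_self, smul_zero, add_zero, mul_sub,
      mul_smul_comm, ι_mul_ι_mul_comm u v]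
    abel

variable {f}

lemma ι_mul_mem_exteriorPower (u : U) {a : ExteriorAlgebra K U} (ha : a ∈ ⋀[K]^m U) :
    ι K u * a ∈ ⋀[K]^(m + 1) U := by
  rw [exteriorPower, pow_succ']
  exact mul_mem_mul (LinearMap.mem_range_self _ u) ha

lemma contractLeft_eq_zero_of_mem_exteriorPower_zero {a : ExteriorAlgebra K U} (ha : a ∈ ⋀[K]^0 U) :
    f⨼a = 0 := by
  rw [exteriorPower, pow_zero] at ha
  obtain ⟨r, rfl⟩ := mem_one.1 ha
  exact contractLeft_algebraMap _ f r

lemma contractLeft_mem_exteriorPower {a : ExteriorAlgebra K U} (ha : a ∈ ⋀[K]^(m + 1) U) :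
    f⨼a ∈ ⋀[K]^m U := by
  induction m generalizing a with
  | zero =>
    obtain ⟨u, rfl⟩ : ∃ u, ι K u = a := by simpa using ha
    rw [CliffordAlgebra.contractLeft_ι]
    exact SetLike.algebraMap_mem_graded _ _
  | succ m ih =>
    rw [exteriorPower, pow_succ'] at ha
    induction ha using Submodule.mul_induction_on' with
    | mem_mul_mem v hv b hb =>
      obtain ⟨u, rfl⟩ := hv
      rw [contractLeft_ι_mul]
      exact sub_mem (smul_mem _ _ hb) (ι_mul_mem_exteriorPower u (ih hb))
    | add a _ b _ ha hb => rw [map_add]; exact add_mem ha hb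

lemma ι_mul_contractLeft_mem_exteriorPower (u : U) {a : ExteriorAlgebra K U} (ha : a ∈ ⋀[K]^m U) :
    ι K u * (f⨼a) ∈ ⋀[K]^m U := by
  cases m with
  | zero => rw [contractLeft_eq_zero_of_mem_exteriorPower_zero ha, mul_zero]; exact zero_mem _
  | succ m => exact ι_mul_mem_exteriorPower u (contractLeft_mem_exteriorPower ha)

lemma map_mem_exteriorPower (φ : U →ₗ[K] V) {a : ExteriorAlgebra K U} (ha : a ∈ ⋀[K]^m U) :
    ExteriorAlgebra.map φ a ∈ ⋀[K]^m V := by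
  have := mem_map_of_mem (f := (ExteriorAlgebra.map φ).toLinearMap) ha
  rw [exteriorPower, Submodule.map_pow, ExteriorAlgebra.ι_range_map_map] at this
  exact pow_le_pow_left' (LinearMap.map_le_range) m this

lemma map_zero_eq_zero_of_mem_exteriorPower_succ {a : ExteriorAlgebra K U}
    (ha : a ∈ ⋀[K]^(m + 1) U) : ExteriorAlgebra.map (0 : U →ₗ[K] V) a = 0 := by
  have := mem_map_of_mem (f := (ExteriorAlgebra.map (0 : U →ₗ[K] V)).toLinearMap) ha
  rw [exteriorPower, Submodule.map_pow, ExteriorAlgebra.ι_range_map_map] at this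
  simpa [pow_succ] using this

variable {e : U}

lemma contractLeft_ι_mul_eq_sub (he : f e = 1) (a : ExteriorAlgebra K U) :
    f⨼(ι K e * a) = a - ι K e * (f⨼a) := by
  rw [contractLeft_ι_mul, he, one_smul]

lemma contractLeft_ι_mul_eq_map (he : f e = 1) (a : ExteriorAlgebra K U) :
    f⨼(ι K e * a) = ExteriorAlgebra.map (LinearMap.id + f.smulRight (-e)) a := by
  rw [contractLeft_ι_mul_eq_sub he, map_id_add_smulRight, map_neg, neg_mul, sub_eq_add_neg]

end Exterior

section LinearIdeal

/-- The ideal of the exterior algebra generated by the vectors of `L`, as a subspace. It is written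
as the right ideal `ι(L) · Λ(U)`, which is two-sided because vectors anticommute. -/
def linearIdeal (L : Submodule K U) : Submodule K (ExteriorAlgebra K U) :=
  L.map (ι K) * ⊤

variable {L L' : Submodule K U} {f : Dual K U} {e : U} {a : ExteriorAlgebra K U}

lemma linearIdeal_le {P : Submodule K (ExteriorAlgebra K U)} :
    linearIdeal L ≤ P ↔ ∀ u ∈ L, ∀ a, ι K u * a ∈ P := by
  simp [linearIdeal, Submodule.mul_le]

lemma ι_mul_mem_linearIdeal_of_mem {u : U} (hu : u ∈ L) (a : ExteriorAlgebra K U) :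
    ι K u * a ∈ linearIdeal L :=
  linearIdeal_le.1 le_rfl u hu a

lemma linearIdeal_mono (h : L ≤ L') : linearIdeal L ≤ linearIdeal L' :=
  linearIdeal_le.2 fun _ hu => ι_mul_mem_linearIdeal_of_mem (h hu)

lemma linearIdeal_bot : linearIdeal (⊥ : Submodule K U) = ⊥ := by
  simp [linearIdeal]

lemma ι_mul_mem_linearIdeal (v : U) (ha : a ∈ linearIdeal L) : ι K v * a ∈ linearIdeal L := by
  suffices linearIdeal L ≤ (linearIdeal L).comap (LinearMap.mulLeft K (ι K v)) from this ha
  refine linearIdeal_le.2 fun u hu a => ?_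
  rw [mem_comap, LinearMap.mulLeft_apply, ι_mul_ι_mul_comm]
  exact neg_mem (ι_mul_mem_linearIdeal_of_mem hu _)

lemma mul_mem_linearIdeal_left (b : ExteriorAlgebra K U) (ha : a ∈ linearIdeal L) :
    b * a ∈ linearIdeal L := by
  induction b using CliffordAlgebra.left_induction with
  | algebraMap r => rw [← Algebra.smul_def]; exact smul_mem _ r ha
  | add b c hb hc => rw [add_mul]; exact add_mem hb hc
  | ι_mul b v hb => rw [mul_assoc]; exact ι_mul_mem_linearIdeal v hb

lemma mul_mem_linearIdeal_right (b : ExteriorAlgebra K U) (ha : a ∈ linearIdeal L) :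
    a * b ∈ linearIdeal L := by
  have := mul_mem_mul ha (mem_top (x := b))
  rw [linearIdeal, mul_assoc] at this
  exact SetLike.le_def.1 (mul_le_mul_right le_top _) this

lemma contractLeft_mem_linearIdeal (hf : L ≤ LinearMap.ker f) (ha : a ∈ linearIdeal L) :
    f⨼a ∈ linearIdeal L := by
  suffices linearIdeal L ≤ (linearIdeal L).comap (contractLeft f) from this ha
  refine linearIdeal_le.2 fun u hu a => ?_
  rw [mem_comap, contractLeft_ι_mul, LinearMap.mem_ker.1 (hf hu), zero_smul, zero_sub]
  exact neg_mem (ι_mul_mem_linearIdeal_of_mem hu _)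

lemma map_mem_linearIdeal {φ : U →ₗ[K] V} {L' : Submodule K V} (h : L ≤ L'.comap φ)
    (ha : a ∈ linearIdeal L) : ExteriorAlgebra.map φ a ∈ linearIdeal L' := by
  suffices linearIdeal L ≤ (linearIdeal L').comap (ExteriorAlgebra.map φ).toLinearMap from this ha
  refine linearIdeal_le.2 fun u hu a => ?_
  rw [mem_comap, AlgHom.toLinearMap_apply, map_mul, ExteriorAlgebra.map_apply_ι]
  exact ι_mul_mem_linearIdeal_of_mem (mem_comap.1 (h hu)) _

lemma mem_linearIdeal_iff_contractLeft (he : f e = 1) (hf : L ≤ LinearMap.ker f) :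
    a ∈ linearIdeal L ↔ f⨼(ι K e * a) ∈ linearIdeal L ∧ f⨼a ∈ linearIdeal L := by
  refine ⟨fun ha => ⟨contractLeft_mem_linearIdeal hf (ι_mul_mem_linearIdeal e ha),
    contractLeft_mem_linearIdeal hf ha⟩, fun ⟨h₁, h₂⟩ => ?_⟩
  rw [contractLeft_ι_mul_eq_sub he] at h₁
  exact (Submodule.sub_mem_iff_left _ (ι_mul_mem_linearIdeal e h₂)).1 h₁

lemma mem_linearIdeal_sup_span_iff (he : f e = 1) (hf : L ≤ LinearMap.ker f) :
    a ∈ linearIdeal (L ⊔ K ∙ e) ↔ f⨼(ι K e * a) ∈ linearIdeal L := by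
  constructor
  · rw [contractLeft_ι_mul_eq_map he]
    refine map_mem_linearIdeal (sup_le (fun u hu => ?_) ?_)
    · simpa [LinearMap.mem_ker.1 (hf hu)] using hu
    · simp [span_singleton_le_iff_mem, he]
  · intro h
    rw [contractLeft_ι_mul_eq_sub he] at h
    have he' := ι_mul_mem_linearIdeal_of_mem
      (mem_sup_right (S := L) (mem_span_singleton_self (R := K) e)) (f⨼a)
    exact (Submodule.sub_mem_iff_left _ he').1 (linearIdeal_mono le_sup_left h)

lemma proj_mem_linearIdeal (ha : a ∈ linearIdeal L) (d : ℕ) :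
    GradedRing.proj (fun i : ℕ => ⋀[K]^i U) d a ∈ linearIdeal L := by
  induction ha using Submodule.mul_induction_on' with
  | mem_mul_mem v hv b _ =>
    obtain ⟨u, hu, rfl⟩ := hv
    have h1 : ι K u ∈ ⋀[K]^1 U := by simp
    rw [GradedRing.proj_apply]
    rcases le_or_gt 1 d with h | h
    · rw [DirectSum.coe_decompose_mul_of_left_mem_of_le (fun i : ℕ => ⋀[K]^i U) h1 h]
      exact ι_mul_mem_linearIdeal_of_mem hu _
    · rw [DirectSum.coe_decompose_mul_of_left_mem_of_not_le (fun i : ℕ => ⋀[K]^i U) h1 h.not_ge]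
      exact zero_mem _
  | add a _ b _ ha hb => rw [map_add]; exact add_mem ha hb

lemma mem_span_ι_image_iff :
    a ∈ TwoSidedIdeal.span (ι K '' (L : Set U)) ↔ a ∈ linearIdeal L := by
  constructor
  · intro ha
    induction ha using TwoSidedIdeal.span_induction with
    | mem x hx =>
      obtain ⟨u, hu, rfl⟩ := hx
      simpa using ι_mul_mem_linearIdeal_of_mem hu 1
    | zero => exact zero_mem _
    | add x y _ _ hx hy => exact add_mem hx hy
    | neg x _ hx => exact neg_mem hx
    | left_absorb b x _ hx => exact mul_mem_linearIdeal_left b hx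
    | right_absorb b x _ hx => exact mul_mem_linearIdeal_right b hx
  · intro ha
    induction ha using Submodule.mul_induction_on' with
    | mem_mul_mem v hv b _ =>
      exact TwoSidedIdeal.mul_mem_right _ _ _ (TwoSidedIdeal.subset_span hv)
    | add a _ b _ ha hb => exact add_mem ha hb

lemma exists_finiteDimensional_mem_linearIdeal_inf (ha : a ∈ linearIdeal L) :
    ∃ W : Submodule K U, FiniteDimensional K W ∧ a ∈ linearIdeal (L ⊓ W) := by
  induction ha using Submodule.mul_induction_on' with
  | mem_mul_mem v hv b _ =>
    obtain ⟨u, hu, rfl⟩ := hv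
    exact ⟨K ∙ u, inferInstance,
      ι_mul_mem_linearIdeal_of_mem (mem_inf.2 ⟨hu, mem_span_singleton_self u⟩) b⟩
  | add a _ b _ ha hb =>
    obtain ⟨W, hW, ha⟩ := ha
    obtain ⟨W', hW', hb⟩ := hb
    exact ⟨W ⊔ W', inferInstance,
      add_mem (linearIdeal_mono (inf_le_inf_left L le_sup_left) ha)
        (linearIdeal_mono (inf_le_inf_left L le_sup_right) hb)⟩

end LinearIdeal

section SubExterior

/-- The exterior algebra of `W`, as a subspace of the exterior algebra of the ambient space. -/
def subExterior (W : Submodule K U) : Submodule K (ExteriorAlgebra K U) :=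
  LinearMap.range (ExteriorAlgebra.map W.subtype).toLinearMap

variable {W : Submodule K U} {f : Dual K U} {e : U} {m : ℕ} {a : ExteriorAlgebra K U}

lemma map_mem_subExterior {φ : U →ₗ[K] V} {W' : Submodule K V} (h : W ≤ W'.comap φ)
    (ha : a ∈ subExterior W) : ExteriorAlgebra.map φ a ∈ subExterior W' := by
  obtain ⟨b, rfl⟩ := ha
  refine ⟨ExteriorAlgebra.map (φ.restrict h) b, ?_⟩
  simp only [AlgHom.toLinearMap_apply, ← AlgHom.comp_apply, ExteriorAlgebra.map_comp_map]
  rfl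

lemma subExterior_mono {W' : Submodule K U} (h : W ≤ W') : subExterior W ≤ subExterior W' :=
  fun a ha => by simpa using map_mem_subExterior (φ := LinearMap.id) (W' := W') h ha

lemma ι_mul_mem_subExterior {u : U} (hu : u ∈ W) (ha : a ∈ subExterior W) :
    ι K u * a ∈ subExterior W := by
  obtain ⟨b, rfl⟩ := ha
  exact ⟨ι K ⟨u, hu⟩ * b, by simp⟩

lemma contractLeft_mem_subExterior (f : Dual K U) (ha : a ∈ subExterior W) :
    f⨼a ∈ subExterior W := by
  obtain ⟨b, rfl⟩ := ha
  exact ⟨(f ∘ₗ W.subtype)⨼b, (contractLeft_map _ f b).symm⟩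

lemma contractLeft_eq_zero_of_mem_subExterior (hf : W ≤ LinearMap.ker f)
    (ha : a ∈ subExterior W) : f⨼a = 0 := by
  obtain ⟨b, rfl⟩ := ha
  have hf' : f ∘ₗ W.subtype = 0 := LinearMap.ext fun w => hf w.2
  rw [AlgHom.toLinearMap_apply, contractLeft_map, hf', map_zero, LinearMap.zero_apply, map_zero]

lemma eq_zero_of_mem_subExterior_bot (ha : a ∈ subExterior (⊥ : Submodule K U))
    (hm : a ∈ ⋀[K]^(m + 1) U) : a = 0 := by
  obtain ⟨b, rfl⟩ := ha
  have hid : LinearMap.id ∘ₗ (⊥ : Submodule K U).subtype = 0 ∘ₗ (⊥ : Submodule K U).subtype :=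
    Subsingleton.elim _ _
  rw [← map_zero_eq_zero_of_mem_exteriorPower_succ (V := U) hm]
  simp only [AlgHom.toLinearMap_apply, ← AlgHom.comp_apply, ExteriorAlgebra.map_comp_map, ← hid]
  rfl

lemma mem_subExterior_sup_span_iff (he : f e = 1) (hf : W ≤ LinearMap.ker f) :
    a ∈ subExterior (W ⊔ K ∙ e) ↔ f⨼(ι K e * a) ∈ subExterior W ∧ f⨼a ∈ subExterior W := by
  have he' : e ∈ W ⊔ K ∙ e := mem_sup_right (mem_span_singleton_self e)
  have hproj {b : ExteriorAlgebra K U} (hb : b ∈ subExterior (W ⊔ K ∙ e)) :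
      f⨼(ι K e * b) ∈ subExterior W := by
    rw [contractLeft_ι_mul_eq_map he]
    refine map_mem_subExterior (sup_le (fun u hu => ?_) ?_) hb
    · simpa [LinearMap.mem_ker.1 (hf hu)] using hu
    · simp [span_singleton_le_iff_mem, he]
  constructor
  · refine fun ha => ⟨hproj ha, ?_⟩
    simpa [contractLeft_ι_mul_eq_sub he, contractLeft_contractLeft] using
      hproj (contractLeft_mem_subExterior f ha)
  · rintro ⟨h₁, h₂⟩
    rw [contractLeft_ι_mul_eq_sub he] at h₁
    have h := ι_mul_mem_subExterior he' (subExterior_mono le_sup_left h₂)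
    exact (Submodule.sub_mem_iff_left _ h).1 (subExterior_mono le_sup_left h₁)

lemma exists_finiteDimensional_mem_subExterior (a : ExteriorAlgebra K U) :
    ∃ W : Submodule K U, FiniteDimensional K W ∧ a ∈ subExterior W := by
  induction a using CliffordAlgebra.left_induction with
  | algebraMap r => exact ⟨⊥, inferInstance, algebraMap K _ r, by simp⟩
  | add a b ha hb =>
    obtain ⟨W, hW, ha⟩ := ha
    obtain ⟨W', hW', hb⟩ := hb
    exact ⟨W ⊔ W', inferInstance,
      add_mem (subExterior_mono le_sup_left ha) (subExterior_mono le_sup_right hb)⟩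
  | ι_mul a u ha =>
    obtain ⟨W, hW, ha⟩ := ha
    exact ⟨W ⊔ K ∙ u, inferInstance,
      ι_mul_mem_subExterior (mem_sup_right (mem_span_singleton_self u))
        (subExterior_mono le_sup_left ha)⟩

end SubExterior

section Forms

variable {S : Type*} [CommRing S] [Algebra K S] {f : Dual K U}

/-- The operator `ω ↦ θ ∧ ω` on `Λ(U)`-valued forms `S →ₗ[K] Λ(U)`, for `θ = ∑ sᵢ ⊗ uᵢ`: it sends
`ω` to `r ↦ ∑ uᵢ ∧ ω (sᵢ r)`, so that coefficients in `S` act by precomposition. It is the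
differential of a Koszul-type complex. -/
noncomputable def wedge :
    S ⊗[K] U →ₗ[K] (S →ₗ[K] ExteriorAlgebra K U) →ₗ[K] (S →ₗ[K] ExteriorAlgebra K U) :=
  TensorProduct.lift <| LinearMap.mk₂ K
    (fun s u =>
      (LinearMap.lcomp K _ (LinearMap.mulLeft K s)).comp
        (LinearMap.compRight K (LinearMap.mulLeft K (ι K u))))
    (fun s s' u => by ext ω r; simp [add_mul, mul_add])
    (fun c s u => by ext ω r; simp)
    (fun s u u' => by ext ω r; simp [add_mul])
    (fun c s u => by ext ω r; simp)

/-- The contraction of the vector part of an element of `S ⊗ U` by a linear form. -/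
noncomputable def pairing (f : Dual K U) : S ⊗[K] U →ₗ[K] S :=
  TensorProduct.lift (LinearMap.smulRightₗ f)

@[simp]
lemma wedge_tmul_apply (s : S) (u : U) (ω : S →ₗ[K] ExteriorAlgebra K U) (r : S) :
    wedge (s ⊗ₜ u) ω r = ι K u * ω (s * r) :=
  rfl

@[simp]
lemma pairing_tmul (s : S) (u : U) : pairing f (s ⊗ₜ[K] u) = f u • s :=
  rfl

variable (θ θ' : S ⊗[K] U) (ω : S →ₗ[K] ExteriorAlgebra K U)

lemma wedge_add_apply : wedge (θ + θ') ω = wedge θ ω + wedge θ' ω := by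
  rw [map_add, LinearMap.add_apply]

lemma wedge_comm : wedge θ (wedge θ' ω) = -wedge θ' (wedge θ ω) := by
  induction θ with
  | zero => simp
  | add θ₁ θ₂ h₁ h₂ => simp only [map_add, LinearMap.add_apply, h₁, h₂, neg_add]
  | tmul s u =>
    induction θ' with
    | zero => simp
    | add θ₁ θ₂ h₁ h₂ => simp only [map_add, LinearMap.add_apply, h₁, h₂, neg_add]
    | tmul s' u' =>
      ext r
      simp only [wedge_tmul_apply, LinearMap.neg_apply, mul_left_comm s' s r,
        ι_mul_ι_mul_comm u u']

lemma wedge_self : wedge θ (wedge θ ω) = 0 := by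
  induction θ with
  | zero => simp
  | add θ₁ θ₂ h₁ h₂ =>
    simp only [map_add, LinearMap.add_apply, h₁, h₂, wedge_comm θ₁ θ₂, zero_add, add_zero,
      add_neg_cancel]
  | tmul s u => ext r; simp [ι_mul_ι_mul_self]

lemma contractLeft_comp_wedge : contractLeft f ∘ₗ wedge θ ω =
    ω ∘ₗ LinearMap.mulLeft K (pairing f θ) - wedge θ (contractLeft f ∘ₗ ω) := by
  induction θ with
  | zero => ext; simp
  | add θ₁ θ₂ h₁ h₂ =>
    simp only [map_add, LinearMap.add_apply, LinearMap.comp_add, h₁, h₂]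
    ext r
    simp only [LinearMap.add_apply, LinearMap.sub_apply, LinearMap.comp_apply,
      LinearMap.mulLeft_apply, add_mul, map_add]
    abel
  | tmul s u =>
    ext r
    simp [contractLeft_ι_mul]

variable {θ}

lemma contractLeft_comp_wedge_of_pairing_eq_zero (h : pairing f θ = 0) :
    contractLeft f ∘ₗ wedge θ ω = -wedge θ (contractLeft f ∘ₗ ω) := by
  rw [contractLeft_comp_wedge, h]
  ext
  simp

lemma wedge_rTensor_comp {R R' : Type*} [CommRing R] [Algebra K R] [CommRing R'] [Algebra K R']
    (φ : S →ₗ[K] R) (φ' : S →ₗ[K] R') (g : R →ₗ[K] R') (hg : ∀ s r, g (φ s * r) = φ' s * g r)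
    (θ : S ⊗[K] U) (ω : R' →ₗ[K] ExteriorAlgebra K U) :
    wedge (φ.rTensor U θ) (ω ∘ₗ g) = wedge (φ'.rTensor U θ) ω ∘ₗ g := by
  induction θ with
  | zero => ext; simp
  | add θ₁ θ₂ h₁ h₂ => simp only [map_add, LinearMap.add_apply, h₁, h₂, LinearMap.add_comp]
  | tmul s u => ext r; simp [hg]

lemma pairing_rTensor {R : Type*} [CommRing R] [Algebra K R] (φ : S →ₗ[K] R) (θ : S ⊗[K] U) :
    pairing f (φ.rTensor U θ) = φ (pairing f θ) := by
  induction θ with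
  | zero => simp
  | add θ₁ θ₂ h₁ h₂ => simp only [map_add, h₁, h₂]
  | tmul s u => simp

lemma wedge_apply_mem {P : Submodule K (ExteriorAlgebra K U)} (hω : ∀ r, ω r ∈ P) (r : S) :
    wedge θ ω r ∈ LinearMap.range (ι K) * P := by
  induction θ with
  | zero => exact zero_mem _
  | add θ₁ θ₂ h₁ h₂ => rw [map_add]; exact add_mem h₁ h₂
  | tmul s u => exact mul_mem_mul (LinearMap.mem_range_self _ u) (hω _)

lemma contractLeft_comp_wedge_one_tmul {e : U} (he : f e = 1) :
    contractLeft f ∘ₗ wedge (1 ⊗ₜ e) ω = ω - wedge (1 ⊗ₜ e) (contractLeft f ∘ₗ ω) := by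
  ext r
  simp [contractLeft_ι_mul_eq_sub he]

lemma wedge_comp_eq_zero {ε : S →ₐ[K] K} (hε : ε.toLinearMap.rTensor U θ = 0)
    (ω : K →ₗ[K] ExteriorAlgebra K U) : wedge θ (ω ∘ₗ ε.toLinearMap) = 0 := by
  have := wedge_rTensor_comp LinearMap.id ε.toLinearMap ε.toLinearMap (fun s r => map_mul ε s r) θ ω
  rwa [LinearMap.rTensor_id_apply, hε, map_zero, LinearMap.zero_apply, LinearMap.zero_comp] at this

end Forms

section Exactness

variable {S : Type*} [CommRing S] [Algebra K S] {f : Dual K U} {e : U} {m c : ℕ}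
  {N N' : Submodule K (ExteriorAlgebra K U)} {θ : S ⊗[K] U}

/-- The forms on `S` of degree `m` with values in the subspace `N` of `Λ(U)`. -/
def forms (S : Type*) [CommRing S] [Algebra K S] (N : Submodule K (ExteriorAlgebra K U)) (m : ℕ) :
    Submodule K (S →ₗ[K] ExteriorAlgebra K U) where
  carrier := {ω | ∀ r, ω r ∈ N ⊓ ⋀[K]^m U}
  add_mem' h h' r := add_mem (h r) (h' r)
  zero_mem' _ := zero_mem _
  smul_mem' k _ h r := smul_mem _ k (h r)

/-- The complex of `N`-valued forms with differential `ω ↦ θ ∧ ω` is exact in all degrees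
greater than `c`. -/
def IsExactAbove (θ : S ⊗[K] U) (N : Submodule K (ExteriorAlgebra K U)) (c : ℕ) : Prop :=
  ∀ m ≥ c, ∀ ω ∈ forms S N (m + 1), wedge θ ω = 0 → ∃ η ∈ forms S N m, wedge θ η = ω

lemma IsExactAbove.mono {c' : ℕ} (h : IsExactAbove θ N c) (hc : c ≤ c') :
    IsExactAbove θ N c' :=
  fun m hm => h m (hc.trans hm)

lemma isExactAbove_of_forall_eq_zero (h : ∀ m ≥ c, ∀ a ∈ N, a ∈ ⋀[K]^(m + 1) U → a = 0) :
    IsExactAbove θ N c := by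
  intro m hm ω hω _
  refine ⟨0, zero_mem _, ?_⟩
  ext r
  simp [h m hm (ω r) (hω r).1 (hω r).2]

lemma IsExactAbove.algEquiv {S' : Type*} [CommRing S'] [Algebra K S'] (φ : S ≃ₐ[K] S')
    (h : IsExactAbove (φ.toLinearMap.rTensor U θ) N c) : IsExactAbove θ N c := by
  intro m hm ω hω hω0
  have hφ (η : S' →ₗ[K] ExteriorAlgebra K U) :
      wedge θ (η ∘ₗ φ.toLinearMap) = wedge (φ.toLinearMap.rTensor U θ) η ∘ₗ φ.toLinearMap := by
    simpa using wedge_rTensor_comp LinearMap.id φ.toLinearMap φ.toLinearMap (by simp) θ η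
  have hωφ : (ω ∘ₗ φ.symm.toLinearMap) ∘ₗ φ.toLinearMap = ω := by ext; simp
  obtain ⟨η, hη, hηω⟩ := h m hm (ω ∘ₗ φ.symm.toLinearMap) (fun r => hω _) <| by
    have := hφ (ω ∘ₗ φ.symm.toLinearMap)
    rw [hωφ, hω0] at this
    exact (LinearMap.cancel_right φ.surjective).1 (this.symm.trans (LinearMap.zero_comp _).symm)
  exact ⟨η ∘ₗ φ.toLinearMap, fun r => hη _, by rw [hφ, hηω, hωφ]⟩

lemma IsExactAbove.mem_range_ι_mul {ε : S →ₐ[K] K} (hε : ε.toLinearMap.rTensor U θ = 0)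
    (h : IsExactAbove θ N c) (hm : c ≤ m) {a : ExteriorAlgebra K U}
    (ha : a ∈ N ⊓ ⋀[K]^(m + 1) U) : a ∈ LinearMap.range (ι K) * (N ⊓ ⋀[K]^m U) := by
  obtain ⟨η, hη, hηa⟩ := h m hm (LinearMap.toSpanSingleton K _ a ∘ₗ ε.toLinearMap)
    (fun r => smul_mem _ (ε r) ha) (wedge_comp_eq_zero hε _)
  have := wedge_apply_mem (θ := θ) η hη 1
  simpa [hηa] using this

/-- For `e` with `f e = 1`, an element `ω` of `Λ(U)` is `a + e ∧ b` with `a = f⨼(e ∧ ω)` and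
`b = f⨼ω` killed by `f`; the cone consists of those with `a ∈ N` and `b ∈ N'`. On forms this
realizes the mapping cone of the inclusion `N ≤ N'`. -/
def cone (e : U) (f : Dual K U) (N N' : Submodule K (ExteriorAlgebra K U)) :
    Submodule K (ExteriorAlgebra K U) :=
  N.comap (contractLeft f ∘ₗ LinearMap.mulLeft K (ι K e)) ⊓ N'.comap (contractLeft f)

lemma mem_cone {a : ExteriorAlgebra K U} :
    a ∈ cone e f N N' ↔ f⨼(ι K e * a) ∈ N ∧ f⨼a ∈ N' :=
  Iff.rfl

variable (he : f e = 1) (hle : N ≤ N') (hN' : ∀ a ∈ N', f⨼a = 0)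
include he hle hN'

lemma add_ι_mul_mem_cone {a b : ExteriorAlgebra K U} (ha : a ∈ N) (hb : b ∈ N') :
    a + ι K e * b ∈ cone e f N N' := by
  rw [mem_cone, mul_add, ι_mul_ι_mul_self, add_zero, map_add, contractLeft_ι_mul_eq_sub he,
    contractLeft_ι_mul_eq_sub he, hN' a (hle ha), hN' b hb, mul_zero, sub_zero, sub_zero, zero_add]
  exact ⟨ha, hb⟩

variable (hθ : pairing f θ = 0)
include hθ

lemma isExactAbove_cone (hexN : IsExactAbove θ N (c + 1)) (hexN' : IsExactAbove θ N' c) :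
    IsExactAbove (θ + 1 ⊗ₜ e) (cone e f N N') (c + 1) := by
  intro m hm ω hω hω0
  obtain ⟨m, rfl⟩ := Nat.exists_eq_add_of_le' (Nat.one_le_of_lt hm)
  set b := contractLeft f ∘ₗ ω with hb
  have hdecomp : ω = wedge θ b + wedge (1 ⊗ₜ e) b := by
    have := congrArg (contractLeft f).comp hω0
    rw [wedge_add_apply, LinearMap.comp_add, contractLeft_comp_wedge_one_tmul _ he,
      contractLeft_comp_wedge_of_pairing_eq_zero _ hθ, ← hb, LinearMap.comp_zero] at this
    rw [neg_add_eq_zero] at this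
    rw [this, sub_add_cancel]
  have ha : wedge θ b ∈ forms S N (m + 1 + 1) := fun r => by
    rw [eq_sub_of_add_eq hdecomp.symm, LinearMap.sub_apply, wedge_tmul_apply, one_mul, hb,
      LinearMap.comp_apply, ← contractLeft_ι_mul_eq_sub he]
    exact ⟨(hω r).1.1, contractLeft_mem_exteriorPower (ι_mul_mem_exteriorPower e (hω r).2)⟩
  obtain ⟨α, hα, hαa⟩ := hexN (m + 1) hm _ ha (wedge_self θ b)
  obtain ⟨β, hβ, hβb⟩ := hexN' m (Nat.succ_le_succ_iff.1 hm) (b - α)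
    (fun r => sub_mem ⟨(hω r).1.2, contractLeft_mem_exteriorPower (hω r).2⟩
      ⟨hle (hα r).1, (hα r).2⟩)
    (by rw [map_sub, hαa, sub_self])
  refine ⟨α - wedge (1 ⊗ₜ e) β, fun r => ⟨?_, sub_mem (hα r).2 ?_⟩, ?_⟩
  · have := add_ι_mul_mem_cone he hle hN' (hα r).1 (neg_mem (hβ r).1)
    simpa [sub_eq_add_neg] using this
  · simpa using ι_mul_mem_exteriorPower e (hβ r).2
  · rw [wedge_add_apply, map_sub, map_sub, wedge_self, wedge_comm θ, hαa, hβb, map_sub]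
    rw [sub_neg_eq_add, sub_zero, add_assoc, sub_add_cancel]
    exact hdecomp.symm

lemma IsExactAbove.of_cone (hcone : IsExactAbove (θ + 1 ⊗ₜ e) (cone e f N N') c)
    (hexN' : IsExactAbove θ N' c) : IsExactAbove θ N c := by
  intro m hm ω hω hω0
  obtain ⟨η, hη, hηω⟩ := hexN' m hm ω (fun r => ⟨hle (hω r).1, (hω r).2⟩) hω0
  obtain ⟨ζ, hζ, hζω⟩ := hcone m hm (ω + wedge (1 ⊗ₜ e) η)
    (fun r => ⟨by simpa using add_ι_mul_mem_cone he hle hN' (hω r).1 (hη r).1,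
      add_mem (hω r).2 (by simpa using ι_mul_mem_exteriorPower e (hη r).2)⟩)
    (by rw [wedge_add_apply, map_add, map_add, wedge_self, hω0, wedge_comm θ, hηω]
        simp)
  refine ⟨contractLeft f ∘ₗ wedge (1 ⊗ₜ e) ζ,
    fun r => ⟨by simpa using (hζ r).1.1,
      by simpa using contractLeft_mem_exteriorPower (ι_mul_mem_exteriorPower e (hζ r).2)⟩, ?_⟩
  have hfω : contractLeft f ∘ₗ ω = 0 := LinearMap.ext fun r => hN' _ (hle (hω r).1)
  have key := congrArg (fun ω => contractLeft f ∘ₗ wedge (1 ⊗ₜ e) ω) hζω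
  beta_reduce at key
  rwa [wedge_add_apply, map_add, map_add, wedge_self, wedge_self, add_zero, add_zero,
    wedge_comm, LinearMap.comp_neg, contractLeft_comp_wedge_of_pairing_eq_zero _ hθ, neg_neg,
    contractLeft_comp_wedge_one_tmul ω he, hfω, map_zero, sub_zero] at key

end Exactness

section PolynomialExtension

open Polynomial

variable {S : Type*} [CommRing S] [Algebra K S] {f : Dual K U} {e : U} {c : ℕ}
  {N : Submodule K (ExteriorAlgebra K U)} {θ : S ⊗[K] U}

/-- `Polynomial.divX` as a linear map over the base field. -/
noncomputable def divXLinear (K S : Type*) [Field K] [CommRing S] [Algebra K S] :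
    S[X] →ₗ[K] S[X] where
  toFun := divX
  map_add' _ _ := divX_add
  map_smul' k p := by
    ext n
    simp [coeff_divX]

lemma wedge_rTensor_C_comp_divXLinear (ω : S[X] →ₗ[K] ExteriorAlgebra K U) :
    wedge (CAlgHom.toLinearMap.rTensor U θ) (ω ∘ₗ divXLinear K S) =
      wedge (CAlgHom.toLinearMap.rTensor U θ) ω ∘ₗ divXLinear K S :=
  wedge_rTensor_comp _ _ _ (fun _ _ => divX_C_mul) θ ω

lemma wedge_rTensor_C_comp_coeff_zero (ω : S →ₗ[K] ExteriorAlgebra K U) :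
    wedge (CAlgHom.toLinearMap.rTensor U θ) (ω ∘ₗ (lcoeff S 0).restrictScalars K) =
      wedge θ ω ∘ₗ (lcoeff S 0).restrictScalars K := by
  simpa using wedge_rTensor_comp CAlgHom.toLinearMap LinearMap.id
    ((lcoeff S 0).restrictScalars K) (fun s p => by simp) θ ω

lemma wedge_comp_C (ω : S[X] →ₗ[K] ExteriorAlgebra K U) :
    wedge θ (ω ∘ₗ CAlgHom.toLinearMap) =
      wedge (CAlgHom.toLinearMap.rTensor U θ) ω ∘ₗ CAlgHom.toLinearMap := by
  simpa using wedge_rTensor_comp LinearMap.id (CAlgHom (R := K) (A := S)).toLinearMap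
    CAlgHom.toLinearMap (fun s p => by simp) θ ω

variable (he : f e = 1) (hN : ∀ a ∈ N, f⨼a = 0) (hθ : pairing f θ = 0)
include he hθ

/-- The contracting homotopy is `ω ↦ f⨼(ω ∘ divX)`; it leaves the part of `ω` on constant
polynomials, where the differential reduces to `θ`. -/
lemma eq_wedge_divXLinear_add {ω : S[X] →ₗ[K] ExteriorAlgebra K U}
    (hω : wedge (CAlgHom.toLinearMap.rTensor U θ + X ⊗ₜ e) ω = 0) :
    ω = wedge (CAlgHom.toLinearMap.rTensor U θ + X ⊗ₜ e) (contractLeft f ∘ₗ ω ∘ₗ divXLinear K S) +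
      (contractLeft f ∘ₗ wedge (1 ⊗ₜ e) ω) ∘ₗ CAlgHom.toLinearMap ∘ₗ
        (lcoeff S 0).restrictScalars K := by
  set Θ := CAlgHom.toLinearMap.rTensor U θ
  have hΘ : pairing f Θ = 0 := by rw [pairing_rTensor, hθ, map_zero]
  have hCω : wedge Θ (contractLeft f ∘ₗ ω) = ω ∘ₗ LinearMap.mulLeft K X -
      wedge (X ⊗ₜ e) (contractLeft f ∘ₗ ω) := by
    have := congrArg (contractLeft f).comp hω
    rw [wedge_add_apply, LinearMap.comp_add, contractLeft_comp_wedge_of_pairing_eq_zero _ hΘ,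
      contractLeft_comp_wedge, pairing_tmul, he, one_smul, LinearMap.comp_zero] at this
    exact neg_add_eq_zero.1 this
  ext p
  have hX : divX (X * p) = p := by ext; simp [coeff_divX]
  have hωp : ω p = ω (X * divX p) + ω (C (p.coeff 0)) := by rw [← map_add, X_mul_divX_add]
  have hΘp : wedge Θ (contractLeft f ∘ₗ ω ∘ₗ divXLinear K S) p =
      ω (X * divX p) - ι K e * (f⨼ω (X * divX p)) := by
    rw [← LinearMap.comp_assoc, wedge_rTensor_C_comp_divXLinear, hCω]
    simp [divXLinear]
  have hXp : wedge (X ⊗ₜ e) (contractLeft f ∘ₗ ω ∘ₗ divXLinear K S) p = ι K e * (f⨼ω p) := by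
    simp [divXLinear, hX]
  have hCp : ((contractLeft f ∘ₗ wedge (1 ⊗ₜ e) ω) ∘ₗ CAlgHom.toLinearMap ∘ₗ
      (lcoeff S 0).restrictScalars K) p =
        ω (C (p.coeff 0)) - ι K e * (f⨼ω (C (p.coeff 0))) := by
    simp [contractLeft_ι_mul_eq_sub he]
  rw [LinearMap.add_apply, wedge_add_apply, LinearMap.add_apply, hΘp, hXp, hCp, hωp, map_add,
    mul_add]
  abel

include hN in
lemma IsExactAbove.polynomial (h : IsExactAbove θ N c) :
    IsExactAbove (CAlgHom.toLinearMap.rTensor U θ + X ⊗ₜ[K] e) (cone e f N N) c := by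
  intro m hm ω hω hω0
  set Θ := CAlgHom.toLinearMap.rTensor U θ
  have hΘ : pairing f Θ = 0 := by rw [pairing_rTensor, hθ, map_zero]
  have hcone {η : S[X] →ₗ[K] ExteriorAlgebra K U} (hη : η ∈ forms _ N m) :
      η ∈ forms _ (cone e f N N) m := fun p =>
    ⟨by simpa using add_ι_mul_mem_cone he le_rfl hN (hη p).1 (zero_mem N), (hη p).2⟩
  set ω₀ := (contractLeft f ∘ₗ wedge (1 ⊗ₜ e) ω) ∘ₗ CAlgHom.toLinearMap with hω₀
  have hω₀0 : wedge θ ω₀ = 0 := by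
    have := congrArg (fun ω => contractLeft f ∘ₗ wedge (1 ⊗ₜ e) ω) hω0
    have hX : wedge (1 ⊗ₜ e) (wedge (X ⊗ₜ e) ω) = 0 := by ext p; simp [ι_mul_ι_mul_self]
    beta_reduce at this
    rw [wedge_add_apply, map_add, hX, add_zero, map_zero, LinearMap.comp_zero, wedge_comm,
      LinearMap.comp_neg, contractLeft_comp_wedge_of_pairing_eq_zero _ hΘ, neg_neg] at this
    rw [hω₀, wedge_comp_C, this, LinearMap.zero_comp]
  obtain ⟨η, hη, hηω⟩ := h m hm ω₀
    (fun s => ⟨by simpa [ω₀] using (hω (C s)).1.1,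
      by simpa [ω₀] using
        contractLeft_mem_exteriorPower (ι_mul_mem_exteriorPower e (hω (C s)).2)⟩) hω₀0
  refine ⟨contractLeft f ∘ₗ ω ∘ₗ divXLinear K S + η ∘ₗ (lcoeff S 0).restrictScalars K,
    hcone (add_mem (fun p => ⟨(hω (divX p)).1.2, contractLeft_mem_exteriorPower (hω (divX p)).2⟩)
      (fun p => hη (p.coeff 0))), ?_⟩
  have hX : wedge (X ⊗ₜ e) (η ∘ₗ (lcoeff S 0).restrictScalars K) = 0 := by ext p; simp
  conv_rhs => rw [eq_wedge_divXLinear_add he hθ hω0]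
  rw [map_add, wedge_add_apply _ _ (η ∘ₗ _), wedge_rTensor_C_comp_coeff_zero, hηω, hX, add_zero,
    hω₀, LinearMap.comp_assoc]

end PolynomialExtension

section Transvection

variable {S : Type*} [CommRing S] [Algebra K S] {f : Dual K U} {u : U} {m : ℕ}
  {N : Submodule K (ExteriorAlgebra K U)} (θ : S ⊗[K] U) (s : S)
  (ω : S →ₗ[K] ExteriorAlgebra K U)

/-- The action on forms of the `S`-linear transvection `1 + s f(·) u` of `S ⊗ U`. -/
noncomputable def transvection (f : Dual K U) (s : S) (u : U) :
    (S →ₗ[K] ExteriorAlgebra K U) →ₗ[K] (S →ₗ[K] ExteriorAlgebra K U) :=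
  LinearMap.id + wedge (s ⊗ₜ u) ∘ₗ LinearMap.compRight K (contractLeft f)

lemma transvection_apply :
    transvection f s u ω = ω + wedge (s ⊗ₜ u) (contractLeft f ∘ₗ ω) :=
  rfl

lemma wedge_transvection :
    wedge (θ + (pairing f θ * s) ⊗ₜ u) (transvection f s u ω) =
      transvection f s u (wedge θ ω) := by
  have h1 : wedge (s ⊗ₜ u) (ω ∘ₗ LinearMap.mulLeft K (pairing f θ)) =
      wedge ((pairing f θ * s) ⊗ₜ u) ω := by ext r; simp [mul_assoc]
  have h2 : wedge ((pairing f θ * s) ⊗ₜ u) (wedge (s ⊗ₜ u) (contractLeft f ∘ₗ ω)) = 0 := by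
    ext r; simp [ι_mul_ι_mul_self]
  rw [transvection_apply, transvection_apply, wedge_add_apply, map_add, map_add, h2,
    contractLeft_comp_wedge, map_sub, h1, wedge_comm θ]
  abel

lemma transvection_neg_transvection (hu : f u = 0) :
    transvection f (-s) u (transvection f s u ω) = ω := by
  have h : contractLeft f ∘ₗ wedge (s ⊗ₜ u) (contractLeft f ∘ₗ ω) = 0 := by
    ext r
    simp [contractLeft_ι_mul, contractLeft_contractLeft, hu]
  rw [transvection_apply, transvection_apply, LinearMap.comp_add, h, add_zero,
    TensorProduct.neg_tmul, map_neg, LinearMap.neg_apply, add_neg_cancel_right]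

variable {ω}

lemma transvection_mem_forms (hN : ∀ a ∈ N, ι K u * (f⨼a) ∈ N) (hω : ω ∈ forms S N m) :
    transvection f s u ω ∈ forms S N m := fun r =>
  add_mem (hω r) ⟨hN _ (hω _).1, ι_mul_contractLeft_mem_exteriorPower u (hω _).2⟩

/-- A transvection as an automorphism of the space of forms. -/
noncomputable def transvectionEquiv (s : S) (hu : f u = 0) :
    (S →ₗ[K] ExteriorAlgebra K U) ≃ₗ[K] (S →ₗ[K] ExteriorAlgebra K U) :=
  { transvection f s u with
    invFun := transvection f (-s) u
    left_inv := fun ω => transvection_neg_transvection s ω hu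
    right_inv := fun ω => by
      have := transvection_neg_transvection (-s) ω hu
      rwa [neg_neg] at this }

lemma transvectionEquiv_apply (hu : f u = 0) :
    transvectionEquiv s hu ω = transvection f s u ω :=
  rfl

lemma transvectionEquiv_symm_apply (hu : f u = 0) :
    (transvectionEquiv s hu).symm ω = transvection f (-s) u ω :=
  rfl

lemma pairing_add_sum_tmul {α : Type*} (A : Finset α) (y : α → S) {x : α → U}
    (hx : ∀ a, f (x a) = 0) : pairing f (θ + ∑ a ∈ A, y a ⊗ₜ x a) = pairing f θ := by
  simp [hx]

lemma exists_equiv_wedge_add_sum_tmul {α : Type*} {θ : S ⊗[K] U} {y : α → S} {x : α → U}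
    {q : α → Dual K U} (hθ : ∀ a, pairing (q a) θ = 1) (hqx : ∀ a b, q a (x b) = 0)
    (hN : ∀ a, ∀ z ∈ N, ι K (x a) * (q a⨼z) ∈ N) (A : Finset α) :
    ∃ Φ : (S →ₗ[K] ExteriorAlgebra K U) ≃ₗ[K] (S →ₗ[K] ExteriorAlgebra K U),
      (∀ ω, wedge (θ + ∑ a ∈ A, y a ⊗ₜ x a) (Φ ω) = Φ (wedge θ ω)) ∧
      (∀ m, ∀ ω ∈ forms S N m, Φ ω ∈ forms S N m ∧ Φ.symm ω ∈ forms S N m) ∧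
      ∀ ω, (∀ a r, ω (y a * r) = 0) → Φ ω = ω := by
  classical
  induction A using Finset.induction with
  | empty => exact ⟨LinearEquiv.refl K _, by simp, fun _ _ h => ⟨h, h⟩, fun _ _ => rfl⟩
  | insert b A hb ih =>
    obtain ⟨Φ, hΦ, hmem, hfix⟩ := ih
    refine ⟨Φ ≪≫ₗ transvectionEquiv (y b) (hqx b b), fun ω => ?_, fun m ω hω => ⟨?_, ?_⟩,
      fun ω hω => ?_⟩
    · have := wedge_transvection (f := q b) (u := x b) (θ + ∑ a ∈ A, y a ⊗ₜ x a) (y b) (Φ ω)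
      rw [pairing_add_sum_tmul θ A y (hqx b), hθ, one_mul, hΦ] at this
      rw [Finset.sum_insert hb, add_comm (y b ⊗ₜ x b), ← add_assoc]
      exact this
    · rw [LinearEquiv.trans_apply, transvectionEquiv_apply]
      exact transvection_mem_forms (y b) (hN b) (hmem m ω hω).1
    · rw [LinearEquiv.symm_trans_apply, transvectionEquiv_symm_apply]
      exact (hmem m _ (transvection_mem_forms (-y b) (hN b) hω)).2
    · have : wedge (y b ⊗ₜ x b) (contractLeft (q b) ∘ₗ ω) = 0 := by ext r; simp [hω]
      rw [LinearEquiv.trans_apply, hfix ω hω, transvectionEquiv_apply, transvection_apply, this,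
        add_zero]

end Transvection

section ConstantDifferential

variable {S : Type*} [CommRing S] [Algebra K S] {e : U} {c : ℕ}
  {N : Submodule K (ExteriorAlgebra K U)}

lemma isExactAbove_one_tmul (h : ∀ m ≥ c, ∀ z ∈ N ⊓ ⋀[K]^(m + 1) U, ι K e * z = 0 →
    ∃ u ∈ N ⊓ ⋀[K]^m U, ι K e * u = z) : IsExactAbove ((1 : S) ⊗ₜ[K] e) N c := by
  intro m hm ω hω hω0
  let d : ↥(N ⊓ ⋀[K]^m U) →ₗ[K] ExteriorAlgebra K U :=
    LinearMap.mulLeft K (ι K e) ∘ₗ Submodule.subtype _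
  have hωd (r : S) : ω r ∈ LinearMap.range d := by
    obtain ⟨u, hu, hur⟩ := h m hm (ω r) (hω r) (by simpa using LinearMap.congr_fun hω0 r)
    exact ⟨⟨u, hu⟩, hur⟩
  obtain ⟨g, hg⟩ := d.rangeRestrict.exists_rightInverse_of_surjective d.range_rangeRestrict
  refine ⟨Submodule.subtype _ ∘ₗ g ∘ₗ ω.codRestrict _ hωd, fun r => Subtype.prop _, ?_⟩
  ext r
  simpa [d] using congrArg Subtype.val (LinearMap.congr_fun hg (ω.codRestrict _ hωd r))

/-- The transvections with parameters `y a`, `q a`, `x a` conjugate the differential to `e ∧ ·`.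
They fix the forms `r ↦ ε r • z`, which makes it possible to read off a primitive of `z` under
`e ∧ ·` from one of `r ↦ ε r • z` under the whole differential. -/
lemma IsExactAbove.of_annihilator_le {α : Type*} [Fintype α] {ε : S →ₐ[K] K} {y : α → S}
    {x : α → U} {q : α → Dual K U} {F : Submodule K (ExteriorAlgebra K U)}
    (hε : ∀ a, ε (y a) = 0) (hqe : ∀ a, q a e = 1) (hqx : ∀ a b, q a (x b) = 0)
    (hN : ∀ a, ∀ z ∈ N, ι K (x a) * (q a⨼z) ∈ N) (hFN : F ≤ N)
    (hF : ∀ z ∈ N, ι K e * z = 0 → z ∈ F)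
    (h : IsExactAbove (1 ⊗ₜ e + ∑ a, y a ⊗ₜ x a) F c) :
    IsExactAbove (1 ⊗ₜ e + ∑ a, y a ⊗ₜ x a) N c := by
  obtain ⟨Φ, hΦ, hmem, hfix⟩ := exists_equiv_wedge_add_sum_tmul (θ := (1 : S) ⊗ₜ e) (y := y)
    (by simp [hqe]) hqx hN Finset.univ
  have hΦsymm (ω : S →ₗ[K] ExteriorAlgebra K U) :
      wedge (1 ⊗ₜ e) (Φ.symm ω) = Φ.symm (wedge (1 ⊗ₜ e + ∑ a, y a ⊗ₜ x a) ω) := by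
    rw [LinearEquiv.eq_symm_apply, ← hΦ, LinearEquiv.apply_symm_apply]
  have hE : IsExactAbove ((1 : S) ⊗ₜ[K] e) N c := by
    refine isExactAbove_one_tmul fun m hm z hz hez => ?_
    set ω := LinearMap.toSpanSingleton K _ z ∘ₗ ε.toLinearMap with hω
    have hω0 : wedge (1 ⊗ₜ e + ∑ a, y a ⊗ₜ x a) ω = 0 := by
      ext r
      simp [hω, hε, hez]
    obtain ⟨ζ, hζ, hζω⟩ := h m hm ω (fun r => smul_mem _ _ ⟨hF z hz.1 hez, hz.2⟩) hω0
    have hζω' : wedge (1 ⊗ₜ e) (Φ.symm ζ) = ω := by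
      rw [hΦsymm, hζω, LinearEquiv.symm_apply_eq, hfix ω (by simp [hω, hε])]
    refine ⟨Φ.symm ζ 1, (hmem m ζ fun r => ⟨hFN (hζ r).1, (hζ r).2⟩).2 1, ?_⟩
    simpa [hω] using LinearMap.congr_fun hζω' 1
  intro m hm ω hω hω0
  obtain ⟨η, hη, hηω⟩ := hE m hm (Φ.symm ω) (hmem _ ω hω).2 (by rw [hΦsymm, hω0, map_zero])
  exact ⟨Φ η, (hmem m η hη).1, by rw [hΦ, hηω, LinearEquiv.apply_symm_apply]⟩

end ConstantDifferential

section CanonicalElement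

variable {f g : Dual K U} {b : U} {c : ℕ} {N : Submodule K (ExteriorAlgebra K U)}
  (W : Submodule K U) [FiniteDimensional K W]

/-- The canonical element of `W* ⊗ W`, with coefficients in `Sym (W*)`: it is `∑ xᵢ* ⊗ xᵢ` for any
basis `x` of `W`. -/
noncomputable def canonicalElement : SymmetricAlgebra K (Dual K W) ⊗[K] U :=
  TensorProduct.map (SymmetricAlgebra.ι K (Dual K W)) W.subtype
    ((dualTensorHomEquiv K W W).symm LinearMap.id)

variable {W}

lemma canonicalElement_eq_sum {α : Type*} [Fintype α] (x : Module.Basis α K W) :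
    canonicalElement W = ∑ a, SymmetricAlgebra.ι K (Dual K W) (x.coord a) ⊗ₜ (x a : U) := by
  have : (dualTensorHomEquiv K W W).symm LinearMap.id = ∑ a, x.coord a ⊗ₜ x a := by
    rw [LinearEquiv.symm_apply_eq]
    ext w
    simp [dualTensorHom_apply, x.sum_repr]
  rw [canonicalElement, this]
  simp

lemma pairing_canonicalElement (hf : W ≤ LinearMap.ker f) :
    pairing f (canonicalElement W) = 0 := by
  have hfw (w : W) : f w = 0 := hf w.2
  simp [canonicalElement_eq_sum (Module.finBasis K W), hfw]

lemma rTensor_algebraMapInv_canonicalElement :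
    SymmetricAlgebra.algebraMapInv.toLinearMap.rTensor U (canonicalElement W) = 0 := by
  simp [canonicalElement_eq_sum (Module.finBasis K W), SymmetricAlgebra.algebraMapInv_ι]

open MvPolynomial in
lemma rTensor_equivMvPolynomial_canonicalElement {α : Type*} [Fintype α] [DecidableEq α]
    (x : Module.Basis α K W) :
    (SymmetricAlgebra.equivMvPolynomial x.dualBasis).toLinearMap.rTensor U (canonicalElement W) =
      ∑ a, X a ⊗ₜ (x a : U) := by
  have hx (a : α) : SymmetricAlgebra.equivMvPolynomial x.dualBasis
      (SymmetricAlgebra.ι K (Dual K W) (x.coord a)) = X a := by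
    rw [← SymmetricAlgebra.equivMvPolynomial_ι_apply x.dualBasis, x.coe_dualBasis]
  simp [canonicalElement_eq_sum x, hx]

lemma IsExactAbove.canonicalElement_sup_span (hgb : g b = 1) (hg : W ≤ LinearMap.ker g)
    (hN : ∀ a ∈ N, g⨼a = 0) (h : IsExactAbove (canonicalElement W) N c) :
    IsExactAbove (canonicalElement (W ⊔ K ∙ b)) (cone b g N N) c := by
  let x := Module.finBasis K W
  let φ := SymmetricAlgebra.equivMvPolynomial x.dualBasis
  let x' : Module.Basis (Fin _) K ↥(W ⊔ K ∙ b) := Module.Basis.mkFinConsOfLE b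
    (mem_sup_right (mem_span_singleton_self b)) x le_sup_left
    (fun k w hw hkw => by
      have hgw : g w = 0 := hg hw
      simpa [hgb, hgw] using congrArg g hkw)
    (fun z hz => by
      obtain ⟨w, hw, _, hk, rfl⟩ := mem_sup.1 hz
      obtain ⟨k, rfl⟩ := mem_span_singleton.1 hk
      exact ⟨-k, by simpa [add_assoc] using hw⟩)
  have hx : IsExactAbove (φ.toLinearMap.rTensor U (canonicalElement W)) N c :=
    IsExactAbove.algEquiv φ.symm <| by
      rw [← LinearMap.comp_apply, ← LinearMap.rTensor_comp]
      simpa using h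
  have hpair : pairing g (φ.toLinearMap.rTensor U (canonicalElement W)) = 0 := by
    rw [pairing_rTensor, pairing_canonicalElement hg, map_zero]
  refine IsExactAbove.algEquiv (SymmetricAlgebra.equivMvPolynomial x'.dualBasis) <|
    IsExactAbove.algEquiv (MvPolynomial.finSuccEquiv K _) ?_
  convert hx.polynomial hgb hN hpair
  rw [rTensor_equivMvPolynomial_canonicalElement x', rTensor_equivMvPolynomial_canonicalElement x]
  simp [Fin.sum_univ_succ, x', add_comm, MvPolynomial.finSuccEquiv_X_zero,
    MvPolynomial.finSuccEquiv_X_succ]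

end CanonicalElement

section Arrangement

variable {κ : Type*}

/-- The intersection, inside `Λ(W)`, of the ideals of `Λ(U)` generated by the `L i` for `i ∈ T`. -/
def arrangementIdeal (W : Submodule K U) (L : κ → Submodule K U) (T : Finset κ) :
    Submodule K (ExteriorAlgebra K U) :=
  subExterior W ⊓ ⨅ i ∈ T, linearIdeal (L i)

variable {S : Type*} [CommRing S] [Algebra K S] {e : κ → U} {f : κ → Dual K U} {W : Submodule K U}
  {L : κ → Submodule K U} {A T : Finset κ} {s : κ} {a : ExteriorAlgebra K U} {θ : S ⊗[K] U}

lemma mem_arrangementIdeal :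
    a ∈ arrangementIdeal W L T ↔ a ∈ subExterior W ∧ ∀ i ∈ T, a ∈ linearIdeal (L i) := by
  simp [arrangementIdeal]

lemma arrangementIdeal_anti {T' : Finset κ} (h : T' ⊆ T) :
    arrangementIdeal W L T ≤ arrangementIdeal W L T' :=
  inf_le_inf le_rfl (biInf_mono h)

variable [DecidableEq κ]

/-- The total space of the cube of the `arrangementIdeal W L (T \ B)` for `B ⊆ A`: the intersection
ideal of the arrangement in which `W` is enlarged by all the `e i` with `i ∈ A`, and each `L i` with
`i ∈ A` by its own `e i`. -/
def cube (e : κ → U) (W : Submodule K U) (L : κ → Submodule K U) (A T : Finset κ) :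
    Submodule K (ExteriorAlgebra K U) :=
  arrangementIdeal (W ⊔ span K (e '' A)) (fun i => if i ∈ A then L i ⊔ K ∙ e i else L i) T

/-- The part of the cube in the ideal of the `e i`, that is, the cube without its initial vertex
`arrangementIdeal W L T`. -/
def puncturedCube (e : κ → U) (W : Submodule K U) (L : κ → Submodule K U) (A T : Finset κ) :
    Submodule K (ExteriorAlgebra K U) :=
  cube e W L A T ⊓ linearIdeal (span K (e '' A))

lemma cube_empty : cube e W L ∅ T = arrangementIdeal W L T := by
  simp [cube]

lemma puncturedCube_empty : puncturedCube e W L ∅ T = ⊥ := by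
  simp [puncturedCube, linearIdeal_bot]

section Cone

variable (hfe : ∀ i j, f i (e j) = if i = j then 1 else 0)
include hfe

lemma span_image_le_ker (hs : s ∉ A) : span K (e '' A) ≤ LinearMap.ker (f s) := by
  rw [span_le]
  rintro _ ⟨i, hi, rfl⟩
  have hsi : s ≠ i := (ne_of_mem_of_not_mem (Finset.mem_coe.1 hi) hs).symm
  rw [SetLike.mem_coe, LinearMap.mem_ker, hfe, if_neg hsi]

lemma contractLeft_eq_zero_of_mem_cube (hW : W ≤ LinearMap.ker (f s)) (hs : s ∉ A)
    (ha : a ∈ cube e W L A T) : f s⨼a = 0 :=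
  contractLeft_eq_zero_of_mem_subExterior (sup_le hW (span_image_le_ker hfe hs)) ha.1

lemma cube_insert (hW : W ≤ LinearMap.ker (f s)) (hL : ∀ i, L i ≤ LinearMap.ker (f s))
    (hsT : s ∈ T) (hsA : s ∉ A) : cube e W L (insert s A) T =
      cone (e s) (f s) (cube e W L A T) (cube e W L A (T.erase s)) := by
  have hfes : f s (e s) = 1 := by simp [hfe]
  have hA := span_image_le_ker hfe hsA
  ext a
  have hi (i : κ) (hi : i ≠ s) :
      a ∈ linearIdeal (if i ∈ insert s A then L i ⊔ K ∙ e i else L i) ↔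
        f s⨼(ι K (e s) * a) ∈ linearIdeal (if i ∈ A then L i ⊔ K ∙ e i else L i) ∧
        f s⨼a ∈ linearIdeal (if i ∈ A then L i ⊔ K ∙ e i else L i) := by
    have hker : (if i ∈ A then L i ⊔ K ∙ e i else L i) ≤ LinearMap.ker (f s) := by
      split_ifs with hiA
      · exact sup_le (hL i) ((span_mono (by simpa using ⟨i, hiA, rfl⟩)).trans hA)
      · exact hL i
    rw [← mem_linearIdeal_iff_contractLeft hfes hker]
    simp only [Finset.mem_insert, hi, false_or]
  have hs : a ∈ linearIdeal (L s ⊔ K ∙ e s) ↔ f s⨼(ι K (e s) * a) ∈ linearIdeal (L s) :=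
    mem_linearIdeal_sup_span_iff hfes (hL s)
  simp only [cube, mem_cone, mem_arrangementIdeal, Finset.coe_insert, Set.image_insert_eq,
    span_insert, sup_comm (K ∙ e s), ← sup_assoc,
    mem_subExterior_sup_span_iff hfes (sup_le hW hA)]
  rw [← Finset.insert_erase hsT]
  simp only [Finset.forall_mem_insert, Finset.mem_insert_self, if_true, hs, if_neg hsA]
  have hrest := forall₂_congr fun i (hiT : i ∈ T.erase s) => hi i (Finset.ne_of_mem_erase hiT)
  rw [hrest, Finset.erase_insert (Finset.notMem_erase s T)]
  simp only [forall_and]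
  tauto

lemma puncturedCube_insert (hW : W ≤ LinearMap.ker (f s)) (hL : ∀ i, L i ≤ LinearMap.ker (f s))
    (hsT : s ∈ T) (hsA : s ∉ A) : puncturedCube e W L (insert s A) T =
      cone (e s) (f s) (puncturedCube e W L A T) (cube e W L A (T.erase s)) := by
  have hfes : f s (e s) = 1 := by simp [hfe]
  ext a
  simp only [puncturedCube, cube_insert hfe hW hL hsT hsA, mem_cone, mem_inf, Finset.coe_insert,
    Set.image_insert_eq, span_insert, sup_comm (K ∙ e s),
    mem_linearIdeal_sup_span_iff hfes (span_image_le_ker hfe hsA)]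
  tauto

end Cone

lemma cube_anti {T' : Finset κ} (h : T' ⊆ T) : cube e W L A T ≤ cube e W L A T' :=
  arrangementIdeal_anti h

lemma puncturedCube_le_cube : puncturedCube e W L A T ≤ cube e W L A T :=
  inf_le_left

section CubeExactness

variable (hfe : ∀ i j, f i (e j) = if i = j then 1 else 0) (hW : ∀ i, W ≤ LinearMap.ker (f i))
  (hL : ∀ i j, L i ≤ LinearMap.ker (f j)) (hθ : ∀ i, pairing (f i) θ = 0)
include hfe hθ

lemma pairing_add_one_tmul_sum (hs : s ∉ A) :
    pairing (f s) (θ + 1 ⊗ₜ ∑ i ∈ A, e i) = 0 := by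
  simp [hθ, hfe, hs]

include hW hL

lemma isExactAbove_cube
    (h : ∀ T' ⊆ T, IsExactAbove θ (arrangementIdeal W L T') T'.card) (hA : A ⊆ T) :
    IsExactAbove (θ + 1 ⊗ₜ ∑ i ∈ A, e i) (cube e W L A T) T.card := by
  induction A using Finset.induction generalizing T with
  | empty => simpa [cube_empty] using h T subset_rfl
  | insert s A hs ih =>
    obtain ⟨hsT, hAT⟩ := Finset.insert_subset_iff.1 hA
    have hcard := Finset.card_erase_add_one hsT
    rw [cube_insert hfe (hW s) (fun i => hL i s) hsT hs, Finset.sum_insert hs, add_comm (e s),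
      TensorProduct.tmul_add, ← add_assoc, ← hcard]
    refine isExactAbove_cone (by simp [hfe]) (cube_anti (T.erase_subset s))
      (fun a => contractLeft_eq_zero_of_mem_cube hfe (hW s) hs)
      (pairing_add_one_tmul_sum hfe hθ hs) (hcard ▸ ih h hAT)
      (ih (fun T' hT' => h T' (hT'.trans (T.erase_subset s))) (Finset.subset_erase.2 ⟨hAT, hs⟩))

variable (h : ∀ T' ⊂ T, IsExactAbove θ (arrangementIdeal W L T') T'.card)
include h

lemma isExactAbove_cube_erase (hsT : s ∈ T) (hs : s ∉ A) (hA : A ⊆ T) :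
    IsExactAbove (θ + 1 ⊗ₜ ∑ i ∈ A, e i) (cube e W L A (T.erase s)) (T.erase s).card :=
  isExactAbove_cube hfe hW hL hθ (fun T' hT' => h T' (hT'.trans_ssubset (T.erase_ssubset hsT)))
    (Finset.subset_erase.2 ⟨hA, hs⟩)

lemma isExactAbove_puncturedCube (hA : A ⊆ T) :
    IsExactAbove (θ + 1 ⊗ₜ ∑ i ∈ A, e i) (puncturedCube e W L A T) T.card := by
  induction A using Finset.induction with
  | empty =>
    rw [puncturedCube_empty]
    exact isExactAbove_of_forall_eq_zero fun _ _ a ha _ => ha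
  | insert s A hs ih =>
    obtain ⟨hsT, hAT⟩ := Finset.insert_subset_iff.1 hA
    have hcard := Finset.card_erase_add_one hsT
    rw [puncturedCube_insert hfe (hW s) (fun i => hL i s) hsT hs, Finset.sum_insert hs,
      add_comm (e s), TensorProduct.tmul_add, ← add_assoc, ← hcard]
    exact isExactAbove_cone (by simp [hfe])
      (puncturedCube_le_cube.trans (cube_anti (T.erase_subset s)))
      (fun a => contractLeft_eq_zero_of_mem_cube hfe (hW s) hs)
      (pairing_add_one_tmul_sum hfe hθ hs) (hcard ▸ ih hAT)
      (isExactAbove_cube_erase hfe hW hL hθ h hsT hs hAT)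

lemma isExactAbove_arrangementIdeal_of_cube (hA : A ⊆ T)
    (hcube : IsExactAbove (θ + 1 ⊗ₜ ∑ i ∈ A, e i) (cube e W L A T) T.card) :
    IsExactAbove θ (arrangementIdeal W L T) T.card := by
  induction A using Finset.induction with
  | empty => simpa [cube_empty] using hcube
  | insert s A hs ih =>
    obtain ⟨hsT, hAT⟩ := Finset.insert_subset_iff.1 hA
    rw [cube_insert hfe (hW s) (fun i => hL i s) hsT hs, Finset.sum_insert hs, add_comm (e s),
      TensorProduct.tmul_add, ← add_assoc] at hcube
    exact ih hAT <| IsExactAbove.of_cone (by simp [hfe]) (cube_anti (T.erase_subset s))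
      (fun a => contractLeft_eq_zero_of_mem_cube hfe (hW s) hs)
      (pairing_add_one_tmul_sum hfe hθ hs) hcube
      ((isExactAbove_cube_erase hfe hW hL hθ h hsT hs hAT).mono (T.card_erase_le))

end CubeExactness

end Arrangement

section ArrangementExactness

variable {κ : Type*} {e : κ → U} {f : κ → Dual K U} {W : Submodule K U}
  {L : κ → Submodule K U} {T : Finset κ}

lemma exists_basis_biSup [FiniteDimensional K W] (hW : W = ⨆ i ∈ T, L i) :
    ∃ (s : Set U) (_ : Fintype s) (x : Module.Basis s K W) (q : s → κ),
      ∀ a, q a ∈ T ∧ (x a : U) ∈ L (q a) := by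
  obtain ⟨s, hs, hspan, hli⟩ := exists_linearIndependent K (⋃ i ∈ T, (L i : Set U))
  have hsW : span K (Set.range ((↑) : s → U)) = W := by
    simp only [Subtype.range_coe, hspan, span_iUnion, span_eq, hW]
  let x := (Module.Basis.span hli).map (LinearEquiv.ofEq _ _ hsW)
  have hx (a : s) : (x a : U) = a := by simp [x, Module.Basis.span_apply]
  have hq (a : s) : ∃ i, i ∈ T ∧ (x a : U) ∈ L i := by simpa [hx] using hs a.2
  choose q hq using hq
  exact ⟨s, FiniteDimensional.fintypeBasisIndex x, x, q, hq⟩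

lemma arrangementIdeal_sup_span {b : U} {g : Dual K U} (hgb : g b = 1) (hg : W ≤ LinearMap.ker g)
    (hLW : ∀ i ∈ T, L i ≤ W) : arrangementIdeal (W ⊔ K ∙ b) L T =
      cone b g (arrangementIdeal W L T) (arrangementIdeal W L T) := by
  ext a
  have hL := forall₂_congr fun i (hi : i ∈ T) =>
    mem_linearIdeal_iff_contractLeft (a := a) hgb ((hLW i hi).trans hg)
  rw [mem_arrangementIdeal, mem_subExterior_sup_span_iff hgb hg, hL]
  simp only [mem_cone, mem_arrangementIdeal, forall_and]
  tauto

lemma isExactAbove_arrangementIdeal_sup_span {b : U} (hb : b ∉ W) [FiniteDimensional K W]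
    (hLW : ∀ i ∈ T, L i ≤ W) {c : ℕ}
    (h : IsExactAbove (canonicalElement W) (arrangementIdeal W L T) c) :
    IsExactAbove (canonicalElement (W ⊔ K ∙ b)) (arrangementIdeal (W ⊔ K ∙ b) L T) c := by
  obtain ⟨g, hgb, hg⟩ := exists_le_ker_of_notMem hb
  have hgb' : ((g b)⁻¹ • g) b = 1 := inv_mul_cancel₀ hgb
  have hg' : W ≤ LinearMap.ker ((g b)⁻¹ • g) := fun w hw => by simp [LinearMap.mem_ker.1 (hg hw)]
  rw [arrangementIdeal_sup_span hgb' hg' hLW]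
  exact h.canonicalElement_sup_span hgb' hg' fun a ha =>
    contractLeft_eq_zero_of_mem_subExterior hg' (mem_arrangementIdeal.1 ha).1

lemma isExactAbove_arrangementIdeal_of_le {W₀ : Submodule K U} [FiniteDimensional K W₀]
    [FiniteDimensional K W] (hle : W₀ ≤ W) (hLW : ∀ i ∈ T, L i ≤ W₀) {c : ℕ}
    (h : IsExactAbove (canonicalElement W₀) (arrangementIdeal W₀ L T) c) :
    IsExactAbove (canonicalElement W) (arrangementIdeal W L T) c := by
  suffices ∀ (t : Finset U) (W : Submodule K U) [FiniteDimensional K W], W = W₀ ⊔ span K t →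
      IsExactAbove (canonicalElement W) (arrangementIdeal W L T) c by
    obtain ⟨t, ht⟩ := (fg_iff_finiteDimensional W).2 inferInstance
    exact this t W (by rw [ht, sup_eq_right.2 hle])
  classical
  intro t
  induction t using Finset.induction with
  | empty =>
    rintro W _ hW
    obtain rfl : W = W₀ := by simpa using hW
    exact h
  | insert b t _ ih =>
    rintro W _ hW
    set W' := W₀ ⊔ span K (t : Set U)
    obtain rfl : W = W' ⊔ K ∙ b := by
      rw [hW, Finset.coe_insert, span_insert, sup_comm (K ∙ b), ← sup_assoc]
    by_cases hb : b ∈ W'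
    · exact ih _ (sup_eq_left.2 ((span_singleton_le_iff_mem b W').2 hb))
    · exact isExactAbove_arrangementIdeal_sup_span hb
        (fun i hi => (hLW i hi).trans le_sup_left) (ih W' rfl)

variable [DecidableEq κ] (hfe : ∀ i j, f i (e j) = if i = j then 1 else 0)
  (hL : ∀ i j, L i ≤ LinearMap.ker (f j))
include hfe hL

lemma ι_mul_contractLeft_mem_cube {a : ExteriorAlgebra K U} {i : κ} {x : U} (hx : x ∈ L i)
    (hxW : x ∈ W) (ha : a ∈ cube e W L T T) : ι K x * (f i⨼a) ∈ cube e W L T T := by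
  rw [cube, mem_arrangementIdeal] at ha ⊢
  refine ⟨ι_mul_mem_subExterior (mem_sup_left hxW) (contractLeft_mem_subExterior _ ha.1),
    fun j hj => ?_⟩
  have hja := ha.2 j hj
  rw [if_pos hj] at hja ⊢
  obtain rfl | hij := eq_or_ne i j
  · exact ι_mul_mem_linearIdeal_of_mem (mem_sup_left hx) _
  · refine ι_mul_mem_linearIdeal x (contractLeft_mem_linearIdeal (sup_le (hL j i) ?_) hja)
    simp [span_singleton_le_iff_mem, hfe, hij]

lemma isExactAbove_cube_self [FiniteDimensional K W] (hW : ∀ i, W ≤ LinearMap.ker (f i))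
    (hT : T.Nonempty) (hWT : W = ⨆ i ∈ T, L i)
    (h : ∀ T' ⊂ T, IsExactAbove (canonicalElement W) (arrangementIdeal W L T') T'.card) :
    IsExactAbove (canonicalElement W + 1 ⊗ₜ ∑ i ∈ T, e i) (cube e W L T T) T.card := by
  obtain ⟨s, _, x, q, hq⟩ := exists_basis_biSup hWT
  have hfsum {i : κ} (hi : i ∈ T) : f i (∑ j ∈ T, e j) = 1 := by simp [hfe, hi]
  have hpunctured := isExactAbove_puncturedCube hfe hW hL
    (fun i => pairing_canonicalElement (hW i)) h subset_rfl
  rw [canonicalElement_eq_sum x, add_comm] at hpunctured ⊢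
  refine hpunctured.of_annihilator_le (ε := SymmetricAlgebra.algebraMapInv)
    (fun a => SymmetricAlgebra.algebraMapInv_ι _) (fun a => hfsum (hq a).1)
    (fun a b => hW (q a) (x b).2)
    (fun a _ => ι_mul_contractLeft_mem_cube hfe hL (hq a).2 (x a).2) puncturedCube_le_cube
    fun z hz hez => ⟨hz, ?_⟩
  obtain ⟨i, hi⟩ := hT
  have hz' : ι K (∑ j ∈ T, e j) * (f i⨼z) = z := by
    have := contractLeft_ι_mul_eq_sub (hfsum hi) z
    rw [hez, map_zero] at this
    exact (sub_eq_zero.1 this.symm).symm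
  rw [← hz']
  exact ι_mul_mem_linearIdeal_of_mem
    (sum_mem fun j hj => subset_span (Set.mem_image_of_mem e hj)) _

theorem isExactAbove_arrangementIdeal [FiniteDimensional K W]
    (hW : ∀ i, W ≤ LinearMap.ker (f i)) (hLW : ∀ i ∈ T, L i ≤ W) :
    IsExactAbove (canonicalElement W) (arrangementIdeal W L T) T.card := by
  induction T using Finset.strongInduction generalizing W with
  | H T ih =>
    have hle : ⨆ i ∈ T, L i ≤ W := iSup₂_le hLW
    have : FiniteDimensional K ↥(⨆ i ∈ T, L i) := finiteDimensional_of_le hle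
    have hW₀ (i : κ) : ⨆ i ∈ T, L i ≤ LinearMap.ker (f i) := hle.trans (hW i)
    have hLW₀ (i : κ) (hi : i ∈ T) : L i ≤ ⨆ i ∈ T, L i := le_biSup L hi
    refine isExactAbove_arrangementIdeal_of_le hle hLW₀ ?_
    obtain rfl | hT := T.eq_empty_or_nonempty
    · refine isExactAbove_of_forall_eq_zero fun m _ a ha => ?_
      exact eq_zero_of_mem_subExterior_bot (by simpa using ha.1)
    · have hproper (T' : Finset κ) (hT' : T' ⊂ T) :=
        ih T' hT' hW₀ fun i hi => hLW₀ i (hT'.subset hi)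
      exact isExactAbove_arrangementIdeal_of_cube hfe hW₀ hL
        (fun i => pairing_canonicalElement (hW₀ i)) hproper subset_rfl
        (isExactAbove_cube_self hfe hL hW₀ hT rfl hproper)

end ArrangementExactness

section Generation

variable {κ : Type*} {L : κ → Submodule K V} {a : ExteriorAlgebra K V} {m : ℕ}

lemma map_mem_range_ι_mul {φ : U →ₗ[K] V} {P : Submodule K (ExteriorAlgebra K U)}
    {Q : Submodule K (ExteriorAlgebra K V)} (h : ∀ b ∈ P, ExteriorAlgebra.map φ b ∈ Q)
    {b : ExteriorAlgebra K U} (hb : b ∈ LinearMap.range (ι K) * P) :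
    ExteriorAlgebra.map φ b ∈ LinearMap.range (ι K) * Q := by
  induction hb using Submodule.mul_induction_on' with
  | mem_mul_mem v hv b hb =>
    obtain ⟨u, rfl⟩ := hv
    rw [map_mul, ExteriorAlgebra.map_apply_ι]
    exact mul_mem_mul (LinearMap.mem_range_self _ _) (h b hb)
  | add a _ b _ ha hb => rw [map_add]; exact add_mem ha hb

lemma exists_finiteDimensional_forall_mem_linearIdeal_inf [Finite κ]
    (ha : ∀ i, a ∈ linearIdeal (L i)) : ∃ W : Submodule K V, FiniteDimensional K W ∧
      a ∈ subExterior W ∧ ∀ i, a ∈ linearIdeal (L i ⊓ W) := by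
  obtain ⟨W₀, _, ha₀⟩ := exists_finiteDimensional_mem_subExterior a
  choose W hW haW using fun i => exists_finiteDimensional_mem_linearIdeal_inf (ha i)
  exact ⟨W₀ ⊔ ⨆ i, W i, inferInstance, subExterior_mono le_sup_left ha₀, fun i =>
    linearIdeal_mono (inf_le_inf_left _ ((le_iSup W i).trans le_sup_right)) (haW i)⟩

variable [Fintype κ]

lemma mem_range_ι_mul_of_mem_linearIdeal (hm : Fintype.card κ ≤ m)
    (ha : ∀ i, a ∈ linearIdeal (L i)) (ham : a ∈ ⋀[K]^(m + 1) V) :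
    a ∈ LinearMap.range (ι K) * ((⨅ i, linearIdeal (L i)) ⊓ ⋀[K]^m V) := by
  classical
  obtain ⟨W, _, haW, haL⟩ := exists_finiteDimensional_forall_mem_linearIdeal_inf ha
  let inl := LinearMap.inl K V (κ → K)
  let fst := LinearMap.fst K V (κ → K)
  let e (i : κ) : V × (κ → K) := (0, Pi.single i 1)
  let f (i : κ) : Dual K (V × (κ → K)) := LinearMap.proj i ∘ₗ LinearMap.snd K V (κ → K)
  have hker (P : Submodule K V) (i : κ) : P.map inl ≤ LinearMap.ker (f i) := by
    rintro _ ⟨v, _, rfl⟩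
    simp [f, inl]
  have hexact := isExactAbove_arrangementIdeal (e := e) (f := f) (W := W.map inl)
    (L := fun i => (L i ⊓ W).map inl) (T := Finset.univ)
    (fun i j => by simp [f, e, Pi.single_apply]) (fun i => hker _) (hker W)
    (fun i _ => map_mono inf_le_right)
  have hinl : ExteriorAlgebra.map inl a ∈
      arrangementIdeal (W.map inl) (fun i => (L i ⊓ W).map inl) Finset.univ :=
    mem_arrangementIdeal.2 ⟨map_mem_subExterior (le_comap_map _ _) haW, fun i _ =>
      map_mem_linearIdeal (le_comap_map _ _) (haL i)⟩
  have hgen := hexact.mem_range_ι_mul rTensor_algebraMapInv_canonicalElement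
    (by rwa [Finset.card_univ]) ⟨hinl, map_mem_exteriorPower inl ham⟩
  have hfst : ExteriorAlgebra.map fst (ExteriorAlgebra.map inl a) = a := by
    rw [← AlgHom.comp_apply, ExteriorAlgebra.map_comp_map, LinearMap.fst_comp_inl,
      ExteriorAlgebra.map_id, AlgHom.id_apply]
  rw [← hfst]
  refine map_mem_range_ι_mul (Q := (⨅ i, linearIdeal (L i)) ⊓ ⋀[K]^m V) ?_ hgen
  refine fun b hb => ⟨(mem_iInf _).2 fun i => ?_, map_mem_exteriorPower fst hb.2⟩
  refine map_mem_linearIdeal ?_ ((mem_arrangementIdeal.1 hb.1).2 i (Finset.mem_univ i))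
  rintro _ ⟨v, hv, rfl⟩
  exact hv.1

lemma mem_of_forall_mem_linearIdeal {I : TwoSidedIdeal (ExteriorAlgebra K V)}
    (hI : ∀ d ≤ Fintype.card κ, ∀ b ∈ ⋀[K]^d V, (∀ i, b ∈ linearIdeal (L i)) → b ∈ I)
    (ham : a ∈ ⋀[K]^m V) (ha : ∀ i, a ∈ linearIdeal (L i)) : a ∈ I := by
  induction m generalizing a with
  | zero => exact hI 0 (Nat.zero_le _) a ham ha
  | succ m ih =>
    by_cases hm : m + 1 ≤ Fintype.card κ
    · exact hI _ hm a ham ha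
    have hgen := mem_range_ι_mul_of_mem_linearIdeal (by omega) ha ham
    clear ham ha
    induction hgen using Submodule.mul_induction_on' with
    | mem_mul_mem v _ b hb => exact I.mul_mem_left _ _ (ih hb.2 ((mem_iInf _).1 hb.1))
    | add b _ c _ hb hc => exact add_mem hb hc

end Generation

end SubspaceArrangement

open SubspaceArrangement in
theorem exterior_intersection_ideal_generated_in_degree_card_general {K V κ : Type*} [Field K]
    [AddCommGroup V] [Module K V] [Fintype κ] (L : κ → Submodule K V) :
    TwoSidedIdeal.span
        {x : ExteriorAlgebra K V |
          x ∈ (⨅ i, TwoSidedIdeal.span (ExteriorAlgebra.ι K '' (L i : Set V))) ∧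
          x ∈ (⨆ d ∈ Set.Iic (Fintype.card κ), ⋀[K]^d V : Submodule K (ExteriorAlgebra K V))}
      = ⨅ i, TwoSidedIdeal.span (ExteriorAlgebra.ι K '' (L i : Set V)) := by
  classical
  have hmem (a : ExteriorAlgebra K V) :
      a ∈ (⨅ i, TwoSidedIdeal.span (ExteriorAlgebra.ι K '' (L i : Set V))) ↔
        ∀ i, a ∈ linearIdeal (L i) := by
    simp only [TwoSidedIdeal.mem_iInf, mem_span_ι_image_iff]
  refine le_antisymm (TwoSidedIdeal.span_le.2 fun a ha => ha.1) fun a ha => ?_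
  rw [← DirectSum.sum_support_decompose (fun i : ℕ => ⋀[K]^i V) a]
  refine sum_mem fun j _ => mem_of_forall_mem_linearIdeal (L := L) (fun d hd b hb hbL => ?_)
    (SetLike.coe_mem _) fun i => proj_mem_linearIdeal ((hmem a).1 ha i) j
  exact TwoSidedIdeal.subset_span
    ⟨(hmem b).2 hbL, Submodule.mem_iSup_of_mem d (Submodule.mem_iSup_of_mem hd hb)⟩

/-- **Subspace arrangement theorem for the exterior algebra (degree bound).**
Let `K` be a field of characteristic zero, `V` a finite-dimensional
`K`-vector space and `L_1, …, L_t` linear subspaces of `V`.  Let `J_i` be the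
two-sided ideal of `Λ(V)` generated by the degree-one elements `ι(L_i)`.
Then `J_1 ∩ ⋯ ∩ J_t` is generated by its elements of degree at most `t`,
i.e. by its elements lying in `⊕_{d ≤ t} Λ^d(V)`. -/
theorem exterior_intersection_ideal_generated_in_degree_card
    (K : Type*) [Field K] [CharZero K]
    (V : Type*) [AddCommGroup V] [Module K V] [FiniteDimensional K V]
    (t : ℕ) (L : Fin t → Submodule K V)
    (J : Fin t → TwoSidedIdeal (ExteriorAlgebra K V))
    (hJ : ∀ i, J i = TwoSidedIdeal.span (ExteriorAlgebra.ι K '' (L i : Set V))) :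
    TwoSidedIdeal.span
        {x : ExteriorAlgebra K V | x ∈ (⨅ i, J i) ∧
          x ∈ (⨆ d ∈ Set.Iic t, ⋀[K]^d V : Submodule K (ExteriorAlgebra K V))}
      = ⨅ i, J i := by
  obtain rfl := funext hJ
  simpa using exterior_intersection_ideal_generated_in_degree_card_general L
end

section
/- Let K be a field and A = ⊕_{d ≥ 0} A_d an ℕ-graded (possibly noncommutative) associative unital K-algebra with A_0 = K·1, and let A_+ = ⊕_{d > 0} A_d. Let G be a finite group acting on A by degree-preserving K-algebra automorphisms, with |G| invertible in K, and let R : A → A denote the Reynolds operator R(f) = |G|^{-1} Σ_{g ∈ G} g·f. Let I_G = A·A_+^G be the left ideal of A generated by the G-invariant elements of positive degree. Suppose f_1, …, f_r are homogeneous elements of positive degree that generate I_G as a left ideal. Then the fixed subalgebra A^G is generated as a K-algebra by R(f_1), …, R(f_r). (Hilbert invariant theorem for graded algebras.) -/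
/-!
Write `I` for the left ideal generated by the invariants of positive degree and `R` for the
Reynolds operator. As `G` fixes `A₀` pointwise, every `g • a - a` lies in `A₊`, so
`g • (a * s) - a * s = (g • a - a) * s ∈ A₊ * I` for every invariant `s ∈ I`. Averaging over `G`
shows that `f - R f ∈ A₊ * I` for all `f ∈ I`, and the graded Nakayama lemma turns generators `f`
of `I` into generators `R f`. Finally, if an invariant `x` of positive degree is written as
`∑ aᵢ * R fᵢ`, then `x = R x = ∑ R aᵢ * R fᵢ`, where the `R aᵢ` are invariants of smaller degree,
so that induction on the degree finishes the proof.
-/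

open DirectSum HomogeneousIdeal

section GradedRing

variable {ι σ A : Type*} [Semiring A] [SetLike σ A] [AddSubmonoidClass σ A] [DecidableEq ι]

theorem coe_decompose_mul_mem [AddMonoid ι] (𝒜 : ι → σ) [GradedRing 𝒜] {C : AddSubmonoid A}
    {a b : A} {n : ι}
    (h : ∀ i j, i + j = n → (decompose 𝒜 a i * decompose 𝒜 b j : A) ∈ C) :
    (decompose 𝒜 (a * b) n : A) ∈ C := by
  classical
  rw [decompose_mul, coe_mul_apply]
  exact sum_mem fun ij hij ↦ h _ _ (Finset.mem_filter.mp hij).2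

theorem coe_decompose_smul {G : Type*} [Monoid G] [MulSemiringAction G A] [AddMonoid ι]
    (𝒜 : ι → σ) [GradedRing 𝒜] {g : G} (hg : ∀ i, ∀ a ∈ 𝒜 i, g • a ∈ 𝒜 i) (a : A) (i : ι) :
    (decompose 𝒜 (g • a) i : A) = g • (decompose 𝒜 a i : A) :=
  let φ : 𝒜 →+*ᵍ 𝒜 := ⟨MulSemiringAction.toRingHom G A g, fun {i a} ↦ hg i a⟩
  (φ.map_directSumDecompose (x := a) (i := i)).symm

variable [AddCommMonoid ι] [PartialOrder ι] [CanonicallyOrderedAdd ι]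

theorem mem_iSup_pos_iff_mem_irrelevant {K : Type*} [CommSemiring K] [Algebra K A]
    (𝒜 : ι → Submodule K A) [GradedAlgebra 𝒜] (a : A) :
    a ∈ ⨆ i ∈ Set.Ioi (0 : ι), 𝒜 i ↔ a ∈ 𝒜₊ := by
  rw [← Submodule.mem_toAddSubmonoid, Submodule.iSup_toAddSubmonoid]
  simp_rw [Submodule.iSup_toAddSubmonoid]
  exact (SetLike.ext_iff.mp (irrelevant_eq_iSup 𝒜) a).symm

/-- The graded Nakayama lemma for left ideals. -/
theorem le_of_le_sup_irrelevant_mul [IsOrderedCancelAddMonoid ι] [WellFoundedLT ι]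
    {𝒜 : ι → σ} [GradedRing 𝒜] {I J : Ideal A} (hJ : J.IsHomogeneous 𝒜)
    (h : I ≤ J ⊔ 𝒜₊.toIdeal * I) : I ≤ J := by
  suffices component_mem : ∀ n, ∀ x ∈ I, (decompose 𝒜 x n : A) ∈ J from
    fun x hx ↦ hJ.mem_iff.mpr fun n ↦ component_mem n x hx
  intro n
  induction n using WellFoundedLT.induction with
  | ind n ih =>
  have mul_component_mem : ∀ z ∈ 𝒜₊.toIdeal * I, (decompose 𝒜 z n : A) ∈ J := by
    intro z hz
    induction hz using Submodule.mul_induction_on' with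
    | mem_mul_mem a ha y hy =>
      refine coe_decompose_mul_mem 𝒜 (C := J.toAddSubmonoid) fun i j hij ↦ ?_
      obtain rfl | hi := eq_zero_or_pos i
      · have a_zero : (decompose 𝒜 a 0 : A) = 0 := ha
        simp [a_zero]
      · exact J.mul_mem_left _ (ih j (hij ▸ lt_add_of_pos_left j hi) y hy)
    | add u _ v _ hu hv => simpa [decompose_add] using J.add_mem hu hv
  intro x hx
  obtain ⟨y, hy, z, hz, rfl⟩ := Submodule.mem_sup.mp (h hx)
  simpa [decompose_add] using J.add_mem (hJ n hy) (mul_component_mem z hz)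

end GradedRing

section IrrelevantIdeal

variable {ι σ A G : Type*} [Ring A] [SetLike σ A] [AddSubmonoidClass σ A] [DecidableEq ι]
  [AddCommMonoid ι] [PartialOrder ι] [CanonicallyOrderedAdd ι] [Monoid G] [MulSemiringAction G A]
  {𝒜 : ι → σ} [GradedRing 𝒜] {g : G}

theorem smul_sub_self_mem_irrelevant (hg : ∀ i, ∀ a ∈ 𝒜 i, g • a ∈ 𝒜 i)
    (hg₀ : ∀ a ∈ 𝒜 0, g • a = a) (a : A) : g • a - a ∈ 𝒜₊ := by
  rw [mem_irrelevant_iff, map_sub, GradedRing.proj_apply, GradedRing.proj_apply,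
    coe_decompose_smul 𝒜 hg, hg₀ _ (SetLike.coe_mem _), sub_self]

theorem smul_sub_self_mem_irrelevant_mul_span (hg : ∀ i, ∀ a ∈ 𝒜 i, g • a ∈ 𝒜 i)
    (hg₀ : ∀ a ∈ 𝒜 0, g • a = a) {T : Set A} (hT : ∀ t ∈ T, g • t = t) {x : A}
    (hx : x ∈ Ideal.span T) : g • x - x ∈ 𝒜₊.toIdeal * Ideal.span T := by
  induction hx using Submodule.closure_induction with
  | zero => simp
  | add x y _ _ hx hy =>
    rw [smul_add, add_sub_add_comm]
    exact Ideal.add_mem _ hx hy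
  | smul_mem a t ht =>
    rw [smul_eq_mul, smul_mul', hT t ht, ← sub_mul]
    exact Ideal.mul_mem_mul (smul_sub_self_mem_irrelevant hg hg₀ a) (Ideal.subset_span ht)

end IrrelevantIdeal

section Reynolds

variable (K G : Type*) {V A : Type*} [CommRing K] [Group G] [Fintype G]
  [Invertible (Fintype.card G : K)]
  [AddCommGroup V] [Module K V] [DistribMulAction G V] [SMulCommClass G K V]
  [Ring A] [Algebra K A] [MulSemiringAction G A] [SMulCommClass G K A]

/-- The Reynolds operator `v ↦ |G|⁻¹ ∑ g, g • v`, averaging over a finite group whose order is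
invertible in the base ring. -/
noncomputable def reynolds : V →ₗ[K] V :=
  (Representation.ofDistribMulAction K G V).averageMap

theorem reynolds_apply (v : V) : reynolds K G v = ⅟(Fintype.card G : K) • ∑ g : G, g • v := by
  simp [reynolds, GroupAlgebra.average]

variable {G} in
theorem smul_reynolds (g : G) (v : V) : g • reynolds K G v = reynolds K G v :=
  (Representation.ofDistribMulAction K G V).averageMap_invariant v g

variable {K G}

theorem reynolds_eq_self {v : V} (hv : ∀ g : G, g • v = v) : reynolds K G v = v :=
  (Representation.ofDistribMulAction K G V).averageMap_id v hv

theorem reynolds_mem {N : Submodule K V} {v : V} (hv : ∀ g : G, g • v ∈ N) :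
    reynolds K G v ∈ N := by
  rw [reynolds_apply]
  exact N.smul_mem _ (N.sum_mem fun g _ ↦ hv g)

theorem reynolds_sub_self_mem {N : Submodule K V} {v : V} (hv : ∀ g : G, g • v - v ∈ N) :
    reynolds K G v - v ∈ N := by
  have average_sub : reynolds K G v - v = ⅟(Fintype.card G : K) • ∑ g : G, (g • v - v) := by
    rw [Finset.sum_sub_distrib, smul_sub, ← reynolds_apply, Finset.sum_const, Finset.card_univ,
      ← Nat.cast_smul_eq_nsmul K, invOf_smul_smul]
  rw [average_sub]
  exact N.smul_mem _ (N.sum_mem fun g _ ↦ hv g)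

theorem reynolds_mul {a b : A} (hb : ∀ g : G, g • b = b) :
    reynolds K G (a * b) = reynolds K G a * b := by
  simp only [reynolds_apply, smul_mul', hb, smul_mul_assoc, Finset.sum_mul]

end Reynolds

theorem adjoin_one_union {K A : Type*} [CommSemiring K] [Semiring A] [Algebra K A] (S : Set A) :
    Algebra.adjoin K (((1 : Submodule K A) : Set A) ∪ S) = Algebra.adjoin K S := by
  rw [Algebra.adjoin_union, sup_eq_right, Algebra.adjoin_le_iff]
  intro a ha
  obtain ⟨k, rfl⟩ := Submodule.mem_one.mp ha
  exact Subalgebra.algebraMap_mem _ k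

theorem smul_eq_self_of_mem_one {G K A : Type*} [CommSemiring K] [Semiring A] [Algebra K A]
    [Monoid G] [MulSemiringAction G A] [SMulCommClass G K A] (g : G) {a : A}
    (ha : a ∈ (1 : Submodule K A)) : g • a = a := by
  obtain ⟨k, rfl⟩ := Submodule.mem_one.mp ha
  exact smul_algebraMap g k

section GradedAlgebra

variable {ι K A G : Type*} [DecidableEq ι] [AddCommMonoid ι] [PartialOrder ι]
  [IsOrderedCancelAddMonoid ι] [CommRing K] [Ring A] [Algebra K A]
  {𝒜 : ι → Submodule K A} [GradedAlgebra 𝒜] [Group G] [Fintype G] [Invertible (Fintype.card G : K)]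
  [MulSemiringAction G A] [SMulCommClass G K A]

theorem reynolds_component_mem_of_mem_span
    (hdeg : ∀ (g : G) (i : ι), ∀ a ∈ 𝒜 i, g • a ∈ 𝒜 i) {S : Set A}
    (hfix : ∀ s ∈ S, ∀ g : G, g • s = s) (hpos : ∀ s ∈ S, ∃ d > 0, s ∈ 𝒜 d)
    {B : Subalgebra K A} (hSB : S ⊆ B) {d : ι}
    (hB : ∀ i < d, ∀ a ∈ 𝒜 i, (∀ g : G, g • a = a) → a ∈ B) {y : A} (hy : y ∈ Ideal.span S) :
    reynolds K G (decompose 𝒜 y d : A) ∈ B := by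
  induction hy using Submodule.closure_induction with
  | zero => simp
  | add y z _ _ hy hz => simpa [decompose_add] using B.add_mem hy hz
  | smul_mem a s hs =>
    obtain ⟨e, he, hse⟩ := hpos s hs
    refine coe_decompose_mul_mem 𝒜
      (C := (B.toSubmodule.comap (reynolds K G)).toAddSubmonoid) fun i j hij ↦ ?_
    change reynolds K G (decompose 𝒜 a i * decompose 𝒜 s j : A) ∈ B
    obtain rfl | hej := eq_or_ne e j
    · rw [decompose_of_mem_same 𝒜 hse, reynolds_mul (hfix s hs)]
      have reynolds_coeff_mem : reynolds K G (decompose 𝒜 a i : A) ∈ B :=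
        hB i (hij ▸ lt_add_of_pos_right i he) _
          (reynolds_mem fun g ↦ hdeg g i _ (SetLike.coe_mem _)) fun g ↦ smul_reynolds K g _
      exact B.mul_mem reynolds_coeff_mem (hSB hs)
    · simp [decompose_of_mem_ne 𝒜 hse hej]

variable [CanonicallyOrderedAdd ι] [WellFoundedLT ι]

theorem span_le_span_image_reynolds (hdeg : ∀ (g : G) (i : ι), ∀ a ∈ 𝒜 i, g • a ∈ 𝒜 i)
    (h₀ : ∀ g : G, ∀ a ∈ 𝒜 0, g • a = a) {S T : Set A}
    (hS : ∀ s ∈ S, SetLike.IsHomogeneousElem 𝒜 s) (hT : ∀ t ∈ T, ∀ g : G, g • t = t)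
    (hST : Ideal.span S = Ideal.span T) :
    Ideal.span S ≤ Ideal.span (reynolds K G '' S) := by
  have image_homogeneous : (Ideal.span (reynolds K G '' S)).IsHomogeneous 𝒜 := by
    refine Ideal.homogeneous_span 𝒜 _ (Set.forall_mem_image.mpr fun s hs ↦ ?_)
    obtain ⟨d, hd⟩ := hS s hs
    exact ⟨d, reynolds_mem fun g ↦ hdeg g d s hd⟩
  refine le_of_le_sup_irrelevant_mul image_homogeneous (Ideal.span_le.mpr fun s hs ↦ ?_)
  have sub_mem : reynolds K G s - s ∈ 𝒜₊.toIdeal * Ideal.span S := by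
    rw [hST]
    refine reynolds_sub_self_mem (N := (𝒜₊.toIdeal * Ideal.span T).restrictScalars K) fun g ↦ ?_
    exact smul_sub_self_mem_irrelevant_mul_span (hdeg g) (h₀ g) (fun t ht ↦ hT t ht g)
      (hST ▸ Ideal.subset_span hs)
  rw [← sub_sub_cancel (reynolds K G s) s]
  exact Submodule.sub_mem_sup (Ideal.subset_span ⟨s, hs, rfl⟩) sub_mem

theorem fixedPoints_subalgebra_eq_adjoin (hdeg : ∀ (g : G) (i : ι), ∀ a ∈ 𝒜 i, g • a ∈ 𝒜 i)
    {S : Set A} (hfix : ∀ s ∈ S, ∀ g : G, g • s = s) (hpos : ∀ s ∈ S, ∃ d > 0, s ∈ 𝒜 d)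
    (hspan : ∀ a ∈ 𝒜₊, (∀ g : G, g • a = a) → a ∈ Ideal.span S) :
    FixedPoints.subalgebra K A G =
      Algebra.adjoin K ((𝒜 0 ∩ FixedPoints.subalgebra K A G : Set A) ∪ S) := by
  refine le_antisymm ?_ (Algebra.adjoin_le (Set.union_subset Set.inter_subset_right hfix))
  set B := Algebra.adjoin K ((𝒜 0 ∩ FixedPoints.subalgebra K A G : Set A) ∪ S)
  suffices homogeneous_mem : ∀ d, ∀ x ∈ 𝒜 d, (∀ g : G, g • x = x) → x ∈ B by
    classical
    intro x hx
    rw [← sum_support_decompose 𝒜 x]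
    refine B.sum_mem fun d _ ↦ homogeneous_mem d _ (SetLike.coe_mem _) fun g ↦ ?_
    rw [← coe_decompose_smul 𝒜 (hdeg g), hx g]
  intro d
  induction d using WellFoundedLT.induction with
  | ind d ih =>
  intro x hx x_fixed
  obtain rfl | hd := eq_zero_or_pos d
  · exact Algebra.subset_adjoin (.inl ⟨hx, x_fixed⟩)
  · rw [← reynolds_eq_self (K := K) x_fixed, ← decompose_of_mem_same 𝒜 hx]
    exact reynolds_component_mem_of_mem_span hdeg hfix hpos
      (Set.subset_union_right.trans Algebra.subset_adjoin) ih
      (hspan x (mem_irrelevant_of_mem 𝒜 hd hx) x_fixed)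

theorem hilbert_invariant_theorem_graded_general
    (hdeg : ∀ (g : G) (i : ι), ∀ a ∈ 𝒜 i, g • a ∈ 𝒜 i)
    (h₀ : ∀ g : G, ∀ a ∈ 𝒜 0, g • a = a) {S : Set A} (hS : ∀ s ∈ S, ∃ d > 0, s ∈ 𝒜 d)
    (hspan : Ideal.span S = Ideal.span {a : A | (∀ g : G, g • a = a) ∧ a ∈ 𝒜₊}) :
    FixedPoints.subalgebra K A G = Algebra.adjoin K (𝒜 0 ∪ reynolds K G '' S) := by
  have span_le : Ideal.span S ≤ Ideal.span (reynolds K G '' S) :=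
    span_le_span_image_reynolds hdeg h₀ (fun s hs ↦ (hS s hs).imp fun _ ↦ And.right)
      (fun _ ht ↦ ht.1) hspan
  have degree_zero_fixed : (𝒜 0 : Set A) ⊆ FixedPoints.subalgebra K A G := fun a ha g ↦ h₀ g a ha
  rw [← Set.inter_eq_left.mpr degree_zero_fixed]
  refine fixedPoints_subalgebra_eq_adjoin hdeg ?_ ?_ fun a ha a_fixed ↦
    span_le (hspan ▸ Ideal.subset_span ⟨a_fixed, ha⟩)
  · exact Set.forall_mem_image.mpr fun s _ g ↦ smul_reynolds K g s
  · refine Set.forall_mem_image.mpr fun s hs ↦ ?_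
    obtain ⟨d, hd, hsd⟩ := hS s hs
    exact ⟨d, hd, reynolds_mem fun g ↦ hdeg g d s hsd⟩

end GradedAlgebra

/-- **Hilbert invariant theorem for graded algebras.**
Let `A = ⊕ A_d` be an ℕ-graded `K`-algebra with `A_0 = K·1`, and let a finite
group `G` with `|G|` invertible in `K` act on `A` by degree-preserving algebra
automorphisms.  If homogeneous elements `f_1, …, f_r` of positive degree
generate the Hilbert left ideal `I_G = A·A_+^G`, then the fixed subalgebra
`A^G` is generated as a `K`-algebra by `R(f_1), …, R(f_r)`, where `R` is the
Reynolds operator. -/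
theorem hilbert_invariant_theorem_graded
    (K : Type*) [Field K] (A : Type*) [Ring A] [Algebra K A]
    (𝒜 : ℕ → Submodule K A) [GradedAlgebra 𝒜]
    (h0 : 𝒜 0 = (1 : Submodule K A))
    (G : Type*) [Group G] [Fintype G]
    (ρ : G →* (A ≃ₐ[K] A))
    (hdeg : ∀ (g : G) (d : ℕ), ∀ a ∈ 𝒜 d, ρ g a ∈ 𝒜 d)
    (hinv : (Fintype.card G : K) ≠ 0)
    (r : ℕ) (f : Fin r → A)
    (hf : ∀ i, ∃ d > 0, f i ∈ 𝒜 d)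
    (hgen : Ideal.span (Set.range f)
      = Ideal.span {a : A | (∀ g : G, ρ g a = a) ∧
          a ∈ (⨆ d ∈ Set.Ioi (0 : ℕ), 𝒜 d : Submodule K A)}) :
    ∀ x : A,
      x ∈ Algebra.adjoin K
          (Set.range fun i => (Fintype.card G : K)⁻¹ • ∑ g : G, ρ g (f i))
        ↔ ∀ g : G, ρ g x = x := by
  let _ : MulSemiringAction G A := MulSemiringAction.compHom A ρ
  have : SMulCommClass G K A := ⟨fun g ↦ map_smul (ρ g)⟩
  let _ : Invertible (Fintype.card G : K) := invertibleOfNonzero hinv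
  simp only [mem_iSup_pos_iff_mem_irrelevant] at hgen
  have fixed_eq := hilbert_invariant_theorem_graded_general (K := K) hdeg
    (fun g a ha ↦ smul_eq_self_of_mem_one g (h0 ▸ ha)) (Set.forall_mem_range.mpr hf) hgen
  rw [h0, adjoin_one_union, ← Set.range_comp] at fixed_eq
  simp only [Function.comp_def, reynolds_apply, invOf_eq_inv] at fixed_eq
  exact fun x ↦ (SetLike.ext_iff.mp fixed_eq x).symm
end

section
/- Let K be a field and A = ⊕_{d ≥ 0} A_d an ℕ-graded (possibly noncommutative) associative unital K-algebra with A_0 = K·1, and let A_+ = ⊕_{d > 0} A_d. Let G be a finite group acting on A by degree-preserving K-algebra automorphisms, with |G| invertible in K, and let I_G = A·A_+^G be the left ideal of A generated by the G-invariant elements of positive degree. Suppose f_1, …, f_r are homogeneous elements of A_+^G (G-invariant elements of positive degree) that generate I_G as a left ideal of A. Then the fixed subalgebra A^G is generated as a K-algebra by f_1, …, f_r. (Invariant ideal generators are invariant algebra generators.) -/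
/-!
Averaging over `G` is a graded Reynolds operator: a degree-preserving projection `R` of `A` onto
`A^G` with `R (a * b) = R a * b` for invariant `b`. Write an invariant `x` of degree `d > 0` as
`x = ∑ aᵢ fᵢ`. Comparing components of degree `d`, the `aᵢ` may be taken homogeneous of degree
less than `d`, and `x = R x = ∑ R aᵢ fᵢ` then has invariant coefficients `R aᵢ`, which lie
in the subalgebra generated by the `fᵢ` by induction on the degree.
-/

section GradedRing

variable {ι σ A : Type*} [DecidableEq ι] [AddCommMonoid ι] [PartialOrder ι]
  [IsOrderedCancelAddMonoid ι] [CanonicallyOrderedAdd ι] [Sub ι] [OrderedSub ι]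
  [Semiring A] [SetLike σ A] [AddSubmonoidClass σ A]

theorem coe_decompose_mem_closure_mul_of_mem_span (𝒜 : ι → σ) [GradedRing 𝒜] {S : Set A}
    (hS : ∀ s ∈ S, ∃ d > 0, s ∈ 𝒜 d) {x : A} (hx : x ∈ Ideal.span S) (d : ι) :
    (DirectSum.decompose 𝒜 x d : A) ∈
      AddSubmonoid.closure {y | ∃ e < d, ∃ a ∈ 𝒜 e, ∃ s ∈ S, a * s = y} := by
  induction hx using Submodule.closure_induction with
  | zero => simp
  | add x y _ _ hx hy => simpa using add_mem hx hy
  | smul_mem a s hs =>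
    obtain ⟨e, he, hse⟩ := hS s hs
    rw [smul_eq_mul]
    by_cases hed : e ≤ d
    · rw [DirectSum.coe_decompose_mul_of_right_mem_of_le 𝒜 hse hed]
      have hlt : d - e < d := by
        simpa only [tsub_add_cancel_of_le hed] using lt_add_of_pos_right (d - e) he
      exact AddSubmonoid.subset_closure ⟨d - e, hlt, _, SetLike.coe_mem _, s, hs, rfl⟩
    · rw [DirectSum.coe_decompose_mul_of_right_mem_of_not_le 𝒜 hse hed]
      exact zero_mem _

end GradedRing

section Reynolds

/-- A Reynolds operator for a subalgebra `B` of a possibly noncommutative algebra `A`: a linear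
projection of `A` onto `B` that is linear for right multiplication by `B`. The right-handed
condition is the one that suits left ideals of `A`. -/
structure IsReynoldsOperator {K A : Type*} [CommSemiring K] [Semiring A] [Algebra K A]
    (B : Subalgebra K A) (R : A →ₗ[K] A) : Prop
    extends LinearMap.IsProj (Subalgebra.toSubmodule B) R where
  map_mul_of_mem : ∀ a, ∀ b ∈ B, R (a * b) = R a * b

variable {ι K A : Type*} [DecidableEq ι] [AddCommMonoid ι] [PartialOrder ι]
  [IsOrderedCancelAddMonoid ι] [CanonicallyOrderedAdd ι] [Sub ι] [OrderedSub ι] [WellFoundedLT ι]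
  [CommSemiring K] [Semiring A] [Algebra K A] (𝒜 : ι → Submodule K A) [GradedAlgebra 𝒜]
  {B : Subalgebra K A} {R : A →ₗ[K] A} {S : Set A}

theorem IsReynoldsOperator.map_mem_adjoin_of_mem (hR : IsReynoldsOperator B R)
    (hdeg : ∀ d, ∀ a ∈ 𝒜 d, R a ∈ 𝒜 d) (h0 : Subalgebra.toSubmodule B ⊓ 𝒜 0 ≤ 1)
    (hSB : S ⊆ B) (hS : ∀ s ∈ S, ∃ d > 0, s ∈ 𝒜 d)
    (hgen : ∀ d > 0, ∀ b ∈ B, b ∈ 𝒜 d → b ∈ Ideal.span S) {d : ι} {a : A} (ha : a ∈ 𝒜 d) :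
    R a ∈ Algebra.adjoin K S := by
  induction d using WellFoundedLT.induction generalizing a with
  | ind d ih =>
    obtain rfl | hd := eq_zero_or_pos d
    · obtain ⟨k, hk⟩ := Submodule.mem_one.mp (h0 ⟨hR.map_mem a, hdeg 0 a ha⟩)
      exact hk ▸ Subalgebra.algebraMap_mem _ k
    · have hsum : R a ∈
          AddSubmonoid.closure {y | ∃ e < d, ∃ a ∈ 𝒜 e, ∃ s ∈ S, a * s = y} := by
        have hspan : R a ∈ Ideal.span S := hgen d hd _ (hR.map_mem a) (hdeg d a ha)
        simpa only [DirectSum.decompose_of_mem_same 𝒜 (hdeg d a ha)] using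
          coe_decompose_mem_closure_mul_of_mem_span 𝒜 hS hspan d
      have hle : AddSubmonoid.closure {y | ∃ e < d, ∃ a ∈ 𝒜 e, ∃ s ∈ S, a * s = y} ≤
          ((Subalgebra.toSubmodule (Algebra.adjoin K S)).comap R).toAddSubmonoid := by
        rw [AddSubmonoid.closure_le]
        rintro _ ⟨e, he, c, hc, s, hs, rfl⟩
        change R (c * s) ∈ Algebra.adjoin K S
        rw [hR.map_mul_of_mem c s (hSB hs)]
        exact mul_mem (ih e he hc) (Algebra.subset_adjoin hs)
      rw [← hR.map_id _ (hR.map_mem a)]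
      exact hle hsum

theorem invariant_ideal_generators_are_invariant_algebra_generators_general
    (hR : IsReynoldsOperator B R) (hdeg : ∀ d, ∀ a ∈ 𝒜 d, R a ∈ 𝒜 d)
    (h0 : Subalgebra.toSubmodule B ⊓ 𝒜 0 ≤ 1)
    (hSB : S ⊆ B) (hS : ∀ s ∈ S, ∃ d > 0, s ∈ 𝒜 d)
    (hgen : ∀ d > 0, ∀ b ∈ B, b ∈ 𝒜 d → b ∈ Ideal.span S) :
    Algebra.adjoin K S = B := by
  classical
  refine le_antisymm (Algebra.adjoin_le hSB) fun b hb => ?_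
  rw [← hR.map_id b hb, ← DirectSum.sum_support_decompose 𝒜 b, map_sum]
  exact sum_mem fun d _ =>
    hR.map_mem_adjoin_of_mem 𝒜 hdeg h0 hSB hS hgen (SetLike.coe_mem _)

end Reynolds

section Average

variable {K G : Type*} [CommRing K] [Group G] [Fintype G] [Invertible (Fintype.card G : K)]

theorem averageMap_apply_eq_smul_sum {V : Type*} [AddCommGroup V] [Module K V]
    (ρ : Representation K G V) (v : V) :
    ρ.averageMap v = ⅟(Fintype.card G : K) • ∑ g, ρ g v := by
  simp [GroupAlgebra.average]

theorem averageMap_mem_of_forall_mem {V : Type*} [AddCommGroup V] [Module K V]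
    (ρ : Representation K G V) {W : Submodule K V} {v : V} (hv : ∀ g, ρ g v ∈ W) :
    ρ.averageMap v ∈ W := by
  rw [averageMap_apply_eq_smul_sum]
  exact W.smul_mem _ (sum_mem fun g _ => hv g)

theorem isReynoldsOperator_averageMap {A : Type*} [Ring A] [Algebra K A] [MulSemiringAction G A]
    [SMulCommClass G K A] :
    IsReynoldsOperator (FixedPoints.subalgebra K A G)
      (Representation.ofDistribMulAction K G A).averageMap where
  map_mem := Representation.averageMap_invariant (Representation.ofDistribMulAction K G A)
  map_id := Representation.averageMap_id (Representation.ofDistribMulAction K G A)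
  map_mul_of_mem a b hb := by
    have hmul (g : G) : g • (a * b) = g • a * b := by rw [smul_mul', hb g]
    simp only [averageMap_apply_eq_smul_sum, Representation.ofDistribMulAction_apply_apply, hmul,
      ← Finset.sum_mul, smul_mul_assoc]

end Average

/-- **Invariant ideal generators are invariant algebra generators.**
Let `A = ⊕ A_d` be an ℕ-graded `K`-algebra with `A_0 = K·1`, and let a finite
group `G` with `|G|` invertible in `K` act on `A` by degree-preserving algebra
automorphisms.  If homogeneous `G`-invariant elements `f_1, …, f_r` of positive
degree generate the Hilbert left ideal `I_G = A·A_+^G`, then the fixed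
subalgebra `A^G` is generated as a `K`-algebra by `f_1, …, f_r`. -/
theorem invariant_ideal_generators_are_invariant_algebra_generators
    (K : Type*) [Field K] (A : Type*) [Ring A] [Algebra K A]
    (𝒜 : ℕ → Submodule K A) [GradedAlgebra 𝒜]
    (h0 : 𝒜 0 = (1 : Submodule K A))
    (G : Type*) [Group G] [Fintype G]
    (ρ : G →* (A ≃ₐ[K] A))
    (hdeg : ∀ (g : G) (d : ℕ), ∀ a ∈ 𝒜 d, ρ g a ∈ 𝒜 d)
    (hinv : (Fintype.card G : K) ≠ 0)
    (r : ℕ) (f : Fin r → A)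
    (hf : ∀ i, (∃ d > 0, f i ∈ 𝒜 d) ∧ (∀ g : G, ρ g (f i) = f i))
    (hgen : Ideal.span (Set.range f)
      = Ideal.span {a : A | (∀ g : G, ρ g a = a) ∧
          a ∈ (⨆ d ∈ Set.Ioi (0 : ℕ), 𝒜 d : Submodule K A)}) :
    ∀ x : A, x ∈ Algebra.adjoin K (Set.range f) ↔ ∀ g : G, ρ g x = x := by
  let _ := MulSemiringAction.compHom A ρ
  have : SMulCommClass G K A := ⟨fun g => map_smul (ρ g)⟩
  let _ := invertibleOfNonzero hinv
  refine SetLike.ext_iff.mp <| invariant_ideal_generators_are_invariant_algebra_generators_general 𝒜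
    (isReynoldsOperator_averageMap (G := G))
    (fun d a ha => averageMap_mem_of_forall_mem _ fun g => hdeg g d a ha)
    (h0 ▸ inf_le_right) (Set.range_subset_iff.mpr fun i => (hf i).2)
    (Set.forall_mem_range.mpr fun i => (hf i).1) fun d hd b hb hbd => ?_
  rw [hgen]
  exact Ideal.subset_span ⟨hb, Submodule.mem_iSup_of_mem d (Submodule.mem_iSup_of_mem hd hbd)⟩
end
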